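/- arXiv:2001.10360 — 2 statements merged into one kernel-verified Lean document; each statement's English description precedes it below -/
import Mathlib

section
/- Let p ∈ [1, n) with n ≥ 2 and q = np/(n-p). There exists a constant C, depending only on n and p, such that for every weakly differentiable function u on ℝⁿ whose weak gradient belongs to L^p(ℝⁿ), there exists a real number λ (depending on u) with ‖u − λ‖_{L^q(ℝⁿ)} ≤ C ‖∇u‖_{L^p(ℝⁿ)}. -/
/-!
The inequality is reduced to Mathlib's Gagliardo-Nirenberg-Sobolev inequality, which covers
compactly supported `C¹` functions, by mollifying, cutting off, and passing to the limit.

Let `v_k` be the mollification of `u` at scale `1/(k+1)`. Its gradient is the mollification of the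
weak gradient (`enorm_fderiv_mollify_le`), so by Jensen's inequality
`‖∇v_k‖_p ≤ ‖∑ i, |V i|‖_p` (`eLpNorm_fderiv_mollify_le`). For a `C¹` function `v` and a cutoff
`φ_R(x) = f(x / R)`, the function `φ_R (v - c)` is compactly supported and
`∇(φ_R (v - c)) = φ_R ∇v + (v - c) ∇φ_R`. Here `|∇φ_R| ≤ K / R`, and by the Poincaré inequality on
a ball (`poincare_ball`) there is a `c` such that the `L^p` norm of `v - c` on the support of `φ_R`
is at most a multiple of `R ‖∇v‖_p`; the powers of `R` cancel. Hence `‖φ_R (v - c)‖_q ≤ A ‖∇v‖_p`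
with `A` independent of `v` and `R` (`sobolev_cutoff`).

Applied to `v = v_k` and `R = k + 1`, this yields constants `c_k` with `‖φ_k (v_k - c_k)‖_q` bounded
by `A ‖∇u‖_p`, while `v_k → u` almost everywhere and `φ_k → 1`. The `c_k` cannot tend to infinity in
absolute value: otherwise `c_k⁻¹ φ_k (v_k - c_k)` would converge to `-1` almost everywhere and to
`0` in `L^q`. So a subsequence of `c_k` converges to some `λ`, and Fatou's lemma gives the bound on
`‖u - λ‖_q` (`exists_const_of_tendsto`).
-/

open MeasureTheory ENNReal Set Filter

noncomputable section

/-- Euclidean space ℝⁿ. -/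
abbrev Euc (n : ℕ) := EuclideanSpace ℝ (Fin n)

/-- Nonincreasing rearrangement of an `ℝ≥0∞`-valued function. -/
def rearrE {α : Type*} [MeasurableSpace α] (μ : Measure α) (f : α → ℝ≥0∞) (t : ℝ) : ℝ≥0∞ :=
  sInf {l : ℝ≥0∞ | μ {x | l < f x} ≤ ENNReal.ofReal t}

/-- Unsigned nonincreasing rearrangement `f*` of a real-valued function. -/
def rearr {α : Type*} [MeasurableSpace α] (μ : Measure α) (f : α → ℝ) (t : ℝ) : ℝ≥0∞ :=
  rearrE μ (fun x => ENNReal.ofReal |f x|) t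

/-- `u` is weakly differentiable on ℝⁿ with weak gradient `V`. -/
def HasWeakGradient {n : ℕ} (u : Euc n → ℝ) (V : Euc n → Fin n → ℝ) : Prop :=
  LocallyIntegrable u volume ∧ (∀ i, LocallyIntegrable (fun x => V x i) volume) ∧
    ∀ φ : Euc n → ℝ, ContDiff ℝ (⊤ : ℕ∞) φ → HasCompactSupport φ → ∀ i,
      ∫ x, u x * fderiv ℝ φ x (EuclideanSpace.single i 1) = - ∫ x, V x i * φ x

open scoped NNReal Topology Convolution

/-! ### Compactness of the additive constants -/

/-- Let `f k → u` almost everywhere, and let the cutoffs `φ k` be eventually `1` at each point. If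
the functions `φ k * (f k - lam k)` are bounded by `M < ⊤` in `L^q`, then so is `u - l` for some
real number `l`, namely a cluster point of the sequence `lam`. -/
lemma exists_const_of_tendsto {α : Type*} [MeasurableSpace α] {μ : Measure α} (hμ : μ ≠ 0)
    {q : ℝ≥0∞} (hq : q ≠ 0) {f φ : ℕ → α → ℝ} {u : α → ℝ} {lam : ℕ → ℝ} {M : ℝ≥0∞} (hM : M ≠ ⊤)
    (hf : ∀ k, AEStronglyMeasurable (f k) μ) (hφ : ∀ k, AEStronglyMeasurable (φ k) μ)
    (hfu : ∀ᵐ x ∂μ, Tendsto (fun k => f k x) atTop (𝓝 (u x)))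
    (hφ1 : ∀ x, ∀ᶠ k in atTop, φ k x = 1)
    (hb : ∀ k, eLpNorm (fun x => φ k x * (f k x - lam k)) q μ ≤ M) :
    ∃ l : ℝ, eLpNorm (fun x => u x - l) q μ ≤ M := by
  have hmeas : ∀ k, AEStronglyMeasurable (fun x => φ k x * (f k x - lam k)) μ := fun k =>
    (hφ k).mul ((hf k).sub aestronglyMeasurable_const)
  by_cases hbd : ∃ r : ℝ, ∃ᶠ k in atTop, lam k ∈ Metric.closedBall (0 : ℝ) r
  · obtain ⟨r, hr⟩ := hbd
    obtain ⟨l, -, θ, hθ, hl⟩ := tendsto_subseq_of_frequently_bounded Metric.isBounded_closedBall hr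
    refine ⟨l, Lp.eLpNorm_le_of_ae_tendsto (u := atTop)
      (f := fun k x => φ (θ k) x * (f (θ k) x - lam (θ k))) (Eventually.of_forall fun k => hb _)
      (fun k => hmeas _) ?_⟩
    filter_upwards [hfu] with x hx
    have h1 : Tendsto (fun k => f (θ k) x - lam (θ k)) atTop (𝓝 (u x - l)) :=
      (hx.comp hθ.tendsto_atTop).sub hl
    refine h1.congr' ?_
    filter_upwards [hθ.tendsto_atTop.eventually (hφ1 x)] with k hk
    rw [hk, one_mul]
  · exfalso
    have hlam : Tendsto (fun k => |lam k|) atTop atTop := by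
      rw [tendsto_atTop]
      intro r
      have h := not_exists.1 hbd r
      rw [not_frequently] at h
      filter_upwards [h] with k hk
      rw [mem_closedBall_zero_iff, Real.norm_eq_abs, not_le] at hk
      exact hk.le
    have hinv : Tendsto (fun k => (lam k)⁻¹) atTop (𝓝 0) := by
      rw [tendsto_zero_iff_abs_tendsto_zero]
      refine (tendsto_inv_atTop_zero.comp hlam).congr fun k => ?_
      simp
    have hne : ∀ᶠ k in atTop, lam k ≠ 0 := by
      filter_upwards [hlam.eventually_gt_atTop 0] with k hk using abs_pos.1 hk
    -- If `|lam k| → ∞`, rescaling by `(lam k)⁻¹` shows that the constant `-1` vanishes in `L^q`.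
    have key : ∀ C : ℝ≥0∞, C ≠ 0 → eLpNorm (fun _ : α => (-1 : ℝ)) q μ ≤ C := by
      intro C hC
      refine Lp.eLpNorm_le_of_ae_tendsto (u := atTop)
        (f := fun k x => (lam k)⁻¹ * (φ k x * (f k x - lam k))) ?_
        (fun k => (hmeas k).const_mul _) ?_
      · have h0 : Tendsto (fun k => ‖(lam k)⁻¹‖ₑ * M) atTop (𝓝 0) := by
          have h1 := (continuous_enorm.tendsto (0 : ℝ)).comp hinv
          rw [enorm_zero] at h1
          simpa using ENNReal.Tendsto.mul_const h1 (Or.inr hM)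
        filter_upwards [h0.eventually_le_const (pos_iff_ne_zero.2 hC)] with k hk
        refine le_trans ?_ hk
        have := eLpNorm_const_smul (lam k)⁻¹ (fun x => φ k x * (f k x - lam k)) q μ
        simp only [Pi.smul_def, smul_eq_mul] at this
        rw [this]
        gcongr
        exact hb k
      · filter_upwards [hfu] with x hx
        have h1 : Tendsto (fun k => (lam k)⁻¹ * f k x - 1) atTop (𝓝 (0 * u x - 1)) :=
          (hinv.mul hx).sub_const 1
        rw [zero_mul, zero_sub] at h1
        refine h1.congr' ?_
        filter_upwards [hφ1 x, hne] with k hk hk'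
        rw [hk, one_mul, mul_sub, inv_mul_cancel₀ hk']
    have h0 : eLpNorm (fun _ : α => (-1 : ℝ)) q μ = 0 := by
      by_contra h
      obtain ⟨C, hC0, hC⟩ := exists_between (pos_iff_ne_zero.2 h)
      exact absurd (key C hC0.ne') (not_le.2 hC)
    rw [eLpNorm_eq_zero_iff aestronglyMeasurable_const hq] at h0
    have : μ = 0 := by
      have h2 : ∀ᵐ x ∂μ, False := by
        filter_upwards [h0] with x hx
        norm_num at hx
      simpa [ae_iff] using h2
    exact hμ this

/-! ### The Poincaré inequality on balls -/

lemma lintegral_comp_affine_le {n : ℕ} {h : Euc n → ℝ≥0∞} (hh : Measurable h) (a : Euc n) {t : ℝ}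
    (ht : 1 / 2 ≤ t) : ∫⁻ x, h (a + t • x) ≤ 2 ^ n * ∫⁻ x, h x := by
  have ht0 : 0 < t := by linarith
  have h1 : ∫⁻ x, h (a + t • x) = ∫⁻ y, h (a + y) ∂(Measure.map (t • ·) (volume : Measure (Euc n))) := by
    rw [lintegral_map (by fun_prop) (by fun_prop)]
  rw [h1, Measure.map_addHaar_smul _ ht0.ne', lintegral_smul_measure, lintegral_add_left_eq_self]
  simp only [smul_eq_mul]
  gcongr
  rw [finrank_euclideanSpace, Fintype.card_fin, abs_of_pos (by positivity), ← inv_pow,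
    ENNReal.ofReal_pow (by positivity)]
  gcongr
  rw [← ENNReal.ofReal_ofNat]
  gcongr
  rw [inv_le_comm₀ ht0 (by norm_num)]
  linarith

/-- Average of `h` over the points `x + t (y - x)`, for `x, y` in `B`. The integral is done first
in whichever of `x` and `y` has coefficient at least `1 / 2`, so that the Jacobian is at most `2 ^ n`
uniformly in `t`. -/
lemma lintegral_segment_le {n : ℕ} {h : Euc n → ℝ≥0∞} (hh : Measurable h) (B : Set (Euc n)) (t : ℝ) :
    ∫⁻ y in B, ∫⁻ x in B, h (x + t • (y - x)) ≤ volume B * (2 ^ n * ∫⁻ x, h x) := by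
  rcases le_total (1 / 2) t with ht | ht
  · rw [lintegral_lintegral_swap (by fun_prop)]
    calc _ ≤ ∫⁻ x in B, 2 ^ n * ∫⁻ x, h x := by
          refine lintegral_mono fun x => ?_
          refine (setLIntegral_le_lintegral _ _).trans ?_
          refine le_trans (le_of_eq ?_) (lintegral_comp_affine_le hh (x - t • x) ht)
          congr! 3 with y
          module
      _ = _ := by rw [setLIntegral_const, mul_comm]
  · calc _ ≤ ∫⁻ x in B, 2 ^ n * ∫⁻ x, h x := by
          refine lintegral_mono fun y => ?_
          refine (setLIntegral_le_lintegral _ _).trans ?_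
          refine le_trans (le_of_eq ?_) (lintegral_comp_affine_le hh (t • y) (t := 1 - t) (by linarith))
          congr! 3 with x
          module
      _ = _ := by rw [setLIntegral_const, mul_comm]

/-- Jensen's inequality for `x ↦ x ^ P` on a probability space. -/
lemma lintegral_rpow_le {α : Type*} [MeasurableSpace α] {μ : Measure α} [IsProbabilityMeasure μ]
    {P : ℝ≥0} (hP : 1 ≤ P) {g : α → ℝ≥0∞} (hg : AEMeasurable g μ) :
    (∫⁻ x, g x ∂μ) ^ (P : ℝ) ≤ ∫⁻ x, g x ^ (P : ℝ) ∂μ := by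
  have h := eLpNorm_le_eLpNorm_of_exponent_le (μ := μ) (p := 1) (q := P) (f := g)
    (by exact_mod_cast hP) hg.aestronglyMeasurable
  have h2 := ENNReal.rpow_le_rpow h (z := (P : ℝ)) (by positivity)
  rw [eLpNorm_nnreal_pow_eq_lintegral (by positivity), eLpNorm_one_eq_lintegral_enorm] at h2
  simpa using h2

/-- The fundamental theorem of calculus along the segment from `x` to `y`, combined with Jensen's
inequality on `[0, 1]`. -/
lemma enorm_sub_rpow_le {n : ℕ} {P : ℝ≥0} (hP : 1 ≤ P) {v : Euc n → ℝ} (hv : ContDiff ℝ 1 v)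
    (x y : Euc n) : ‖v x - v y‖ₑ ^ (P : ℝ) ≤
      ‖y - x‖ₑ ^ (P : ℝ) * ∫⁻ t in Icc (0 : ℝ) 1, ‖fderiv ℝ v (x + t • (y - x))‖ₑ ^ (P : ℝ) := by
  set g : ℝ → ℝ := fun t => v (x + t • (y - x)) with hg
  have hgd : ∀ t, HasDerivAt g (fderiv ℝ v (x + t • (y - x)) (y - x)) t := by
    intro t
    have h1 : HasDerivAt (fun t : ℝ => x + t • (y - x)) (y - x) t := by
      simpa using ((hasDerivAt_id t).smul_const (y - x)).const_add x
    exact ((hv.differentiable one_ne_zero _).hasFDerivAt).comp_hasDerivAt t h1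
  have hgc : ContDiff ℝ 1 g := hv.comp (by fun_prop)
  have h1 : ‖g 1 - g 0‖ₑ ≤ ∫⁻ t in Icc (0 : ℝ) 1, ‖deriv g t‖ₑ :=
    enorm_sub_le_lintegral_deriv_of_contDiffOn_Icc hgc.contDiffOn zero_le_one
  have hc : Continuous (fun t : ℝ => fderiv ℝ v (x + t • (y - x))) :=
    (hv.continuous_fderiv one_ne_zero).comp (by fun_prop)
  have h2 : ‖v x - v y‖ₑ ≤ ‖y - x‖ₑ * ∫⁻ t in Icc (0 : ℝ) 1, ‖fderiv ℝ v (x + t • (y - x))‖ₑ := by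
    calc ‖v x - v y‖ₑ = ‖g 1 - g 0‖ₑ := by
          rw [← edist_eq_enorm_sub, edist_comm, edist_eq_enorm_sub]; simp [hg]
      _ ≤ _ := h1
      _ ≤ ∫⁻ t in Icc (0 : ℝ) 1, ‖y - x‖ₑ * ‖fderiv ℝ v (x + t • (y - x))‖ₑ := by
          refine lintegral_mono fun t => ?_
          rw [(hgd t).deriv, mul_comm]
          exact ContinuousLinearMap.le_opENorm _ _
      _ = _ := lintegral_const_mul _ hc.enorm.measurable
  have : IsProbabilityMeasure (volume.restrict (Icc (0 : ℝ) 1)) := ⟨by simp⟩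
  calc _ ≤ _ := ENNReal.rpow_le_rpow h2 (by positivity)
    _ ≤ _ := by
      rw [ENNReal.mul_rpow_of_nonneg _ _ (by positivity)]
      gcongr
      exact lintegral_rpow_le hP hc.enorm.measurable.aemeasurable

/-- **Poincaré inequality** on a ball, with the gradient norm taken over the whole space. The
constant `c` is a value `v y` rather than the mean of `v`: some `y` in the
ball makes `∫ |v x - v y| ^ P dx` at most the average of that quantity over the ball. -/
lemma poincare_ball {n : ℕ} {P : ℝ≥0} (hP : 1 ≤ P) {v : Euc n → ℝ} (hv : ContDiff ℝ 1 v)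
    {R : ℝ} (hR : 0 < R) : ∃ c : ℝ,
      eLpNorm (fun x => v x - c) P (volume.restrict (Metric.ball 0 R)) ≤
        ENNReal.ofReal (2 * R) * 2 ^ n * eLpNorm (fderiv ℝ v) P volume := by
  set B : Set (Euc n) := Metric.ball 0 R with hB
  have hP0 : (0 : ℝ) < P := by positivity
  have hB0 : volume B ≠ 0 := (Metric.measure_ball_pos _ _ hR).ne'
  have hBt : volume B ≠ ⊤ := measure_ball_lt_top.ne
  set h : Euc n → ℝ≥0∞ := fun z => ‖fderiv ℝ v z‖ₑ ^ (P : ℝ) with hh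
  have hvc := hv.continuous
  have hdc := hv.continuous_fderiv one_ne_zero
  have hhm : Measurable h := hdc.enorm.measurable.pow_const _
  set F : Euc n → ℝ≥0∞ := fun y => ∫⁻ x in B, ‖v x - v y‖ₑ ^ (P : ℝ) with hF
  have hFm : Measurable F := by
    refine Measurable.lintegral_prod_right' (f := fun z : Euc n × Euc n => ‖v z.2 - v z.1‖ₑ ^ (P : ℝ)) ?_
    exact ((by fun_prop : Continuous fun z : Euc n × Euc n => v z.2 - v z.1).enorm.measurable).pow_const _
  have hint : ∫⁻ y in B, F y ≤ ENNReal.ofReal (2 * R) ^ (P : ℝ) *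
      (volume B * (2 ^ n * ∫⁻ x, h x)) := by
    calc ∫⁻ y in B, F y
        ≤ ∫⁻ y in B, ∫⁻ x in B, ENNReal.ofReal (2 * R) ^ (P : ℝ) *
            ∫⁻ t in Icc (0 : ℝ) 1, h (x + t • (y - x)) := by
          refine setLIntegral_mono' measurableSet_ball fun y hy => ?_
          refine setLIntegral_mono' measurableSet_ball fun x hx => ?_
          refine (enorm_sub_rpow_le hP hv x y).trans ?_
          gcongr
          rw [← ofReal_norm]
          gcongr
          rw [mem_ball_zero_iff] at hx hy
          linarith [norm_sub_le y x]
      _ = ENNReal.ofReal (2 * R) ^ (P : ℝ) *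
            ∫⁻ y in B, ∫⁻ x in B, ∫⁻ t in Icc (0 : ℝ) 1, h (x + t • (y - x)) := by
          have ht : ENNReal.ofReal (2 * R) ^ (P : ℝ) ≠ ⊤ := by finiteness
          rw [← lintegral_const_mul' _ _ ht]
          refine lintegral_congr fun y => ?_
          rw [← lintegral_const_mul' _ _ ht]
      _ = ENNReal.ofReal (2 * R) ^ (P : ℝ) *
            ∫⁻ t in Icc (0 : ℝ) 1, ∫⁻ y in B, ∫⁻ x in B, h (x + t • (y - x)) := by
          congr 1
          symm
          rw [lintegral_lintegral_swap]
          · refine lintegral_congr fun y => ?_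
            rw [lintegral_lintegral_swap]
            exact (hhm.comp (by fun_prop)).aemeasurable
          · refine (Measurable.lintegral_prod_right'
              (f := fun z : (ℝ × Euc n) × Euc n => h (z.2 + z.1.1 • (z.1.2 - z.2))) ?_).aemeasurable
            exact hhm.comp (by fun_prop)
      _ ≤ ENNReal.ofReal (2 * R) ^ (P : ℝ) *
            ∫⁻ t in Icc (0 : ℝ) 1, (volume B * (2 ^ n * ∫⁻ x, h x)) := by
          gcongr with t
          exact lintegral_segment_le hhm B t
      _ = _ := by simp
  obtain ⟨y, -, hy⟩ := exists_le_setLAverage hB0 hBt hFm.aemeasurable.restrict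
  refine ⟨v y, ?_⟩
  rw [← ENNReal.rpow_le_rpow_iff hP0, ENNReal.mul_rpow_of_nonneg _ _ hP0.le,
    eLpNorm_nnreal_pow_eq_lintegral (by positivity), eLpNorm_nnreal_pow_eq_lintegral (by positivity)]
  calc _ ≤ _ := hy
    _ ≤ ENNReal.ofReal (2 * R) ^ (P : ℝ) * (2 ^ n * ∫⁻ x, h x) := by
      rw [setLAverage_eq]
      refine ENNReal.div_le_of_le_mul (hint.trans (le_of_eq ?_))
      ring
    _ ≤ _ := by
      rw [← mul_assoc, ENNReal.mul_rpow_of_nonneg _ _ hP0.le]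
      gcongr
      nth_rw 1 [← ENNReal.rpow_one ((2 : ℝ≥0∞) ^ n)]
      exact ENNReal.rpow_le_rpow_of_exponent_le (one_le_pow₀ (by norm_num)) hP

/-! ### Mollification -/

lemma enorm_clm_le_sum {n : ℕ} (L : Euc n →L[ℝ] ℝ) :
    ‖L‖ₑ ≤ ∑ i, ‖L (EuclideanSpace.single i 1)‖ₑ := by
  have h : ‖L‖ ≤ ∑ i, ‖L (EuclideanSpace.single i 1)‖ := by
    refine L.opNorm_le_bound (Finset.sum_nonneg fun i _ => norm_nonneg _) fun x => ?_
    have hx : L x = ∑ i, x i * L (EuclideanSpace.single i 1) := by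
      conv_lhs => rw [← (EuclideanSpace.basisFun (Fin n) ℝ).sum_repr x]
      simp
    rw [hx, Finset.sum_mul]
    refine (norm_sum_le _ _).trans (Finset.sum_le_sum fun i _ => ?_)
    rw [norm_mul, mul_comm]
    gcongr
    exact PiLp.norm_apply_le x i
  calc ‖L‖ₑ = ENNReal.ofReal ‖L‖ := (ofReal_norm L).symm
    _ ≤ ENNReal.ofReal (∑ i, ‖L (EuclideanSpace.single i 1)‖) := ENNReal.ofReal_le_ofReal h
    _ = _ := by
      rw [ENNReal.ofReal_sum_of_nonneg fun i _ => norm_nonneg _]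
      simp only [ofReal_norm]

/-- Convolution with a probability density does not increase the `L^P` norm, by Jensen's
inequality for the measure `ρ (x - t) dt` and Tonelli's theorem. -/
lemma eLpNorm_mollify_le {n : ℕ} {P : ℝ≥0} (hP : 1 ≤ P) {ρ H : Euc n → ℝ≥0∞} (hρ : Measurable ρ)
    (hρ1 : ∫⁻ x, ρ x = 1) (hH : AEMeasurable H volume) :
    eLpNorm (fun x => ∫⁻ t, ρ (x - t) * H t) P volume ≤ eLpNorm H P volume := by
  have hP0 : (0 : ℝ) < P := by positivity
  rw [← ENNReal.rpow_le_rpow_iff hP0,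
    eLpNorm_nnreal_pow_eq_lintegral (by positivity), eLpNorm_nnreal_pow_eq_lintegral (by positivity)]
  simp only [enorm_eq_self]
  have hρx : ∀ x, Measurable fun t => ρ (x - t) := fun x => hρ.comp (by fun_prop)
  calc ∫⁻ x, (∫⁻ t, ρ (x - t) * H t) ^ (P : ℝ)
      ≤ ∫⁻ x, ∫⁻ t, ρ (x - t) * H t ^ (P : ℝ) := by
        refine lintegral_mono fun x => ?_
        have : IsProbabilityMeasure (volume.withDensity fun t => ρ (x - t)) := by
          refine ⟨?_⟩
          rw [withDensity_apply _ MeasurableSet.univ, setLIntegral_univ,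
            lintegral_sub_left_eq_self ρ x, hρ1]
        have h1 := lintegral_rpow_le (μ := volume.withDensity fun t => ρ (x - t)) hP
          (hH.mono_ac (withDensity_absolutelyContinuous _ _))
        rw [lintegral_withDensity_eq_lintegral_mul₀ (hρx x).aemeasurable hH,
          lintegral_withDensity_eq_lintegral_mul₀ (hρx x).aemeasurable (hH.pow_const _)] at h1
        exact h1
    _ = ∫⁻ t, ∫⁻ x, ρ (x - t) * H t ^ (P : ℝ) := by
        rw [lintegral_lintegral_swap]
        refine AEMeasurable.mul ?_ ?_
        · exact (hρ.comp (by fun_prop)).aemeasurable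
        · exact (hH.pow_const _).comp_snd
    _ = ∫⁻ t, H t ^ (P : ℝ) := by
        refine lintegral_congr fun t => ?_
        rw [lintegral_mul_const _ (by fun_prop : Measurable fun x => ρ (x - t)), lintegral_sub_right_eq_self ρ t, hρ1, one_mul]

/-- The gradient of the mollification `η ⋆ u` is bounded by the mollification of `∑ i, |V i|`: the
derivative falls on `η`, and the definition of the weak gradient is applied to the test function
`t ↦ η (x - t)`. -/
lemma enorm_fderiv_mollify_le {n : ℕ} {u : Euc n → ℝ} {V : Euc n → Fin n → ℝ}
    (h : HasWeakGradient u V) {η : Euc n → ℝ} (hη : ContDiff ℝ (⊤ : ℕ∞) η)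
    (hηs : HasCompactSupport η) (x : Euc n) :
    ‖fderiv ℝ (η ⋆[ContinuousLinearMap.lsmul ℝ ℝ, volume] u) x‖ₑ ≤
      ∫⁻ t, ‖η (x - t)‖ₑ * ‖∑ i, |V t i|‖ₑ := by
  have hη1 : ContDiff ℝ 1 η := hη.of_le (by exact_mod_cast le_top)
  set φ : Euc n → ℝ := fun t => η (x - t) with hφ
  have hφs : HasCompactSupport φ := hηs.comp_homeomorph (Homeomorph.subLeft x)
  have hφc : ContDiff ℝ (⊤ : ℕ∞) φ := hη.comp (by fun_prop)
  have hφd : ∀ t e, fderiv ℝ φ t e = - fderiv ℝ η (x - t) e := by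
    intro t e
    have h1 : HasFDerivAt (fun t : Euc n => x - t) (-ContinuousLinearMap.id ℝ (Euc n)) t :=
      (hasFDerivAt_id t).const_sub x
    have h2 := ((hη1.differentiable one_ne_zero (x - t)).hasFDerivAt).comp t h1
    have h3 : fderiv ℝ φ t = _ := h2.fderiv
    rw [h3]; simp
  have hpart : ∀ i, fderiv ℝ (η ⋆[ContinuousLinearMap.lsmul ℝ ℝ, volume] u) x
      (EuclideanSpace.single i 1) = ∫ t, V t i * φ t := by
    intro i
    rw [← convolution_flip,
      (hηs.hasFDerivAt_convolution_right (ContinuousLinearMap.lsmul ℝ ℝ).flip h.1 hη1 x).fderiv,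
      convolution_precompR_apply _ h.1 (hηs.fderiv ℝ) (hη1.continuous_fderiv one_ne_zero)]
    have h4 := h.2.2 φ hφc hφs i
    simp only [hφd, mul_neg, integral_neg, neg_inj] at h4
    rw [← h4, convolution_def]
    refine integral_congr_ae (Eventually.of_forall fun t => ?_)
    simp [mul_comm]
  calc _ ≤ _ := enorm_clm_le_sum _
    _ ≤ ∑ i, ∫⁻ t, ‖η (x - t)‖ₑ * ‖V t i‖ₑ := by
      refine Finset.sum_le_sum fun i _ => ?_
      rw [hpart]
      refine (enorm_integral_le_lintegral_enorm _).trans (le_of_eq ?_)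
      refine lintegral_congr fun t => ?_
      rw [enorm_mul, mul_comm]
    _ = ∫⁻ t, ∑ i, ‖η (x - t)‖ₑ * ‖V t i‖ₑ := by
      rw [lintegral_finsetSum']
      intro i _
      refine AEMeasurable.mul ?_ (h.2.1 i).aestronglyMeasurable.enorm
      exact hφc.continuous.enorm.measurable.aemeasurable
    _ = _ := by
      refine lintegral_congr fun t => ?_
      rw [← Finset.mul_sum]
      congr 1
      rw [← ofReal_norm, Real.norm_of_nonneg (Finset.sum_nonneg fun i _ => abs_nonneg _),
        ENNReal.ofReal_sum_of_nonneg fun i _ => abs_nonneg _]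
      refine Finset.sum_congr rfl fun i _ => ?_
      rw [← ofReal_norm, Real.norm_eq_abs]

/-- Mollification does not increase the `L^P` norm of the gradient. -/
lemma eLpNorm_fderiv_mollify_le {n : ℕ} {P : ℝ≥0} (hP : 1 ≤ P) {u : Euc n → ℝ}
    {V : Euc n → Fin n → ℝ} (h : HasWeakGradient u V) (ψ : ContDiffBump (0 : Euc n)) :
    eLpNorm (fderiv ℝ (ψ.normed volume ⋆[ContinuousLinearMap.lsmul ℝ ℝ, volume] u)) P volume ≤
      eLpNorm (fun x => ∑ i, |V x i|) P volume := by
  have hGm : AEStronglyMeasurable (fun x => ∑ i, |V x i|) volume :=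
    Finset.aestronglyMeasurable_fun_sum _ fun i _ => (h.2.1 i).aestronglyMeasurable.norm
  have hηc : ContDiff ℝ (⊤ : ℕ∞) (ψ.normed (volume : Measure (Euc n))) := ψ.contDiff_normed
  have h1 : ∫⁻ x, ‖ψ.normed (volume : Measure (Euc n)) x‖ₑ = (1 : ℝ≥0∞) := by
    have := ofReal_integral_eq_lintegral_ofReal (ψ.integrable_normed (μ := volume))
      (Eventually.of_forall ψ.nonneg_normed)
    rw [ψ.integral_normed, ENNReal.ofReal_one] at this
    rw [this]
    refine lintegral_congr fun x => ?_
    rw [← ofReal_norm, Real.norm_of_nonneg (ψ.nonneg_normed x)]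
  have h2 : eLpNorm (fderiv ℝ (ψ.normed volume ⋆[ContinuousLinearMap.lsmul ℝ ℝ, volume] u)) P
      volume ≤ eLpNorm (fun x => ∫⁻ t, ‖ψ.normed volume (x - t)‖ₑ * ‖∑ i, |V t i|‖ₑ) P volume := by
    refine eLpNorm_mono_enorm fun x => ?_
    rw [enorm_eq_self]
    exact enorm_fderiv_mollify_le h hηc ψ.hasCompactSupport_normed x
  have h3 := eLpNorm_mollify_le hP (ρ := fun x => ‖ψ.normed volume x‖ₑ)
    hηc.continuous.enorm.measurable h1 hGm.enorm
  exact (h2.trans h3).trans (eLpNorm_enorm _).le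

/-! ### The Sobolev inequality for cut-off functions -/

/-- The gradient of the rescaled bump `x ↦ f (x / R)` is at most `K / R` with `K` independent of
`R`, and vanishes off the ball of radius `(f.rOut + 1) * R`. -/
lemma exists_fderiv_rescaled_bump_le {n : ℕ} (f : ContDiffBump (0 : Euc n)) :
    ∃ K : ℝ, 0 ≤ K ∧ ∀ R : ℝ, 0 < R →
      (∀ x, ‖fderiv ℝ (fun x => f (R⁻¹ • x)) x‖ ≤ K * R⁻¹) ∧
      ∀ x ∉ Metric.ball (0 : Euc n) ((f.rOut + 1) * R), fderiv ℝ (fun x => f (R⁻¹ • x)) x = 0 := by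
  have hfc : ContDiff ℝ 1 f := f.contDiff
  obtain ⟨K, hK⟩ := (hfc.continuous_fderiv one_ne_zero).bounded_above_of_compact_support
    (f.hasCompactSupport.fderiv ℝ)
  have hK0 : 0 ≤ K := (norm_nonneg _).trans (hK 0)
  refine ⟨K, hK0, fun R hR => ?_⟩
  have hφd : ∀ x, fderiv ℝ (fun x => f (R⁻¹ • x)) x = R⁻¹ • fderiv ℝ f (R⁻¹ • x) := by
    intro x
    have h1 : HasFDerivAt (fun x : Euc n => R⁻¹ • x) (R⁻¹ • ContinuousLinearMap.id ℝ (Euc n)) x :=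
      (hasFDerivAt_id x).const_smul R⁻¹
    have h3 : fderiv ℝ (fun x => f (R⁻¹ • x)) x = _ :=
      (((hfc.differentiable one_ne_zero (R⁻¹ • x)).hasFDerivAt).comp x h1).fderiv
    rw [h3]; ext; simp
  refine ⟨fun x => ?_, fun x hx => ?_⟩
  · rw [hφd, norm_smul, norm_inv, Real.norm_of_nonneg hR.le, mul_comm]
    gcongr
    exact hK _
  · have : fderiv ℝ f (R⁻¹ • x) = 0 := by
      by_contra hne
      have hmem : R⁻¹ • x ∈ tsupport f := support_fderiv_subset ℝ hne
      rw [f.tsupport_eq, mem_closedBall_zero_iff, norm_smul, norm_inv,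
        Real.norm_of_nonneg hR.le, inv_mul_le_iff₀ hR] at hmem
      rw [mem_ball_zero_iff, not_lt] at hx
      nlinarith
    rw [hφd, this, smul_zero]

/-- The error term `(v - c) ∇φ` produced by a cutoff at scale `R`: the factor `R⁻¹` in the bound for
`∇φ` cancels the factor `R` of the Poincaré inequality. -/
lemma eLpNorm_smul_fderiv_cutoff_le {n : ℕ} {P : ℝ≥0} {v φ : Euc n → ℝ} {c K r R : ℝ}
    (hK0 : 0 ≤ K) (hR : 0 < R)
    (hc : eLpNorm (fun x => v x - c) P (volume.restrict (Metric.ball 0 (r * R))) ≤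
        ENNReal.ofReal (2 * (r * R)) * 2 ^ n * eLpNorm (fderiv ℝ v) P volume)
    (hφ : ∀ x, ‖fderiv ℝ φ x‖ ≤ K * R⁻¹)
    (hφ0 : ∀ x ∉ Metric.ball (0 : Euc n) (r * R), fderiv ℝ φ x = 0) :
    eLpNorm (fun x => (v x - c) • fderiv ℝ φ x) P volume ≤
      (K.toNNReal * ((2 * r).toNNReal * 2 ^ n) : ℝ≥0) * eLpNorm (fderiv ℝ v) P volume := by
  have h1 : eLpNorm (fun x => (v x - c) • fderiv ℝ φ x) P volume ≤
      eLpNorm ((Metric.ball 0 (r * R)).indicator fun x => (K * R⁻¹) • (v x - c)) P volume := by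
    refine eLpNorm_mono fun x => ?_
    by_cases hx : x ∈ Metric.ball (0 : Euc n) (r * R)
    · rw [indicator_of_mem hx, norm_smul, norm_smul, mul_comm,
        Real.norm_of_nonneg (by positivity : 0 ≤ K * R⁻¹)]
      gcongr
      exact hφ x
    · rw [hφ0 x hx]
      simp
  have h2 : eLpNorm ((Metric.ball 0 (r * R)).indicator fun x => (K * R⁻¹) • (v x - c)) P volume =
      ‖K * R⁻¹‖ₑ * eLpNorm (fun x => v x - c) P (volume.restrict (Metric.ball 0 (r * R))) := by
    rw [eLpNorm_indicator_eq_eLpNorm_restrict measurableSet_ball]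
    exact eLpNorm_const_smul (K * R⁻¹) (fun x => v x - c) _ _
  rw [h2] at h1
  refine (h1.trans (mul_le_mul_right hc _)).trans (le_of_eq ?_)
  have hcoe : ∀ y : ℝ, (y.toNNReal : ℝ≥0∞) = ENNReal.ofReal y := fun _ => rfl
  have e : ‖K * R⁻¹‖ₑ * ENNReal.ofReal (2 * (r * R)) =
      (K.toNNReal : ℝ≥0∞) * ((2 * r).toNNReal : ℝ≥0∞) := by
    rw [← ofReal_norm, Real.norm_of_nonneg (by positivity),
      ← ENNReal.ofReal_mul (by positivity), hcoe K, hcoe (2 * r), ← ENNReal.ofReal_mul hK0]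
    congr 1
    field_simp
  rw [ENNReal.coe_mul, ENNReal.coe_mul, ENNReal.coe_pow, ENNReal.coe_ofNat, ← mul_assoc,
    ← mul_assoc, e]
  simp only [mul_assoc]

/-- Minkowski's inequality from a pointwise bound on norms. -/
lemma eLpNorm_le_add_of_norm_le {α F : Type*} [MeasurableSpace α] {μ : Measure α}
    [NormedAddCommGroup F] {p : ℝ≥0∞} (hp : 1 ≤ p) {d a b : α → F} (ha : AEStronglyMeasurable a μ)
    (hb : AEStronglyMeasurable b μ) (h : ∀ x, ‖d x‖ ≤ ‖a x‖ + ‖b x‖) :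
    eLpNorm d p μ ≤ eLpNorm a p μ + eLpNorm b p μ := by
  rw [← eLpNorm_norm a, ← eLpNorm_norm b]
  refine le_trans (eLpNorm_mono_real h) ?_
  exact eLpNorm_add_le ha.norm hb.norm hp

/-- Sobolev inequality for `C¹` functions without decay, cut off at scale `R` after subtracting a
suitable constant `c`. The constant `A` depends neither on `v` nor on `R`. -/
lemma sobolev_cutoff {n : ℕ} (hn : 0 < n) {P P' : ℝ≥0} (hP : 1 ≤ P)
    (hPP' : (P' : ℝ)⁻¹ = (P : ℝ)⁻¹ - (n : ℝ)⁻¹) (f : ContDiffBump (0 : Euc n)) :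
    ∃ A : ℝ≥0, ∀ v : Euc n → ℝ, ContDiff ℝ 1 v → ∀ R : ℝ, 0 < R → ∃ c : ℝ,
      eLpNorm (fun x => f (R⁻¹ • x) * (v x - c)) P' volume ≤ A * eLpNorm (fderiv ℝ v) P volume := by
  obtain ⟨K, hK0, hK⟩ := exists_fderiv_rescaled_bump_le f
  obtain ⟨S, hS⟩ : ∃ S : ℝ≥0, ∀ w : Euc n → ℝ, ContDiff ℝ 1 w → HasCompactSupport w →
      eLpNorm w P' volume ≤ S * eLpNorm (fderiv ℝ w) P volume :=
    ⟨_, fun w hw hws => eLpNorm_le_eLpNorm_fderiv_of_eq (F := ℝ) (volume : Measure (Euc n)) hw hws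
      hP (by simpa using hn) (by simpa using hPP')⟩
  refine ⟨S * (1 + K.toNNReal * ((2 * (f.rOut + 1)).toNNReal * 2 ^ n)), fun v hv R hR => ?_⟩
  obtain ⟨c, hc⟩ := poincare_ball hP hv (R := (f.rOut + 1) * R)
    (by have := f.rOut_pos; positivity)
  refine ⟨c, ?_⟩
  have h2 := eLpNorm_smul_fderiv_cutoff_le hK0 hR hc (hK R hR).1 (hK R hR).2
  obtain ⟨φ, hφ⟩ : ∃ φ : Euc n → ℝ, φ = fun x => f (R⁻¹ • x) := ⟨_, rfl⟩
  have hφc : ContDiff ℝ 1 φ := hφ ▸ f.contDiff.comp (by fun_prop)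
  have hφs : HasCompactSupport φ :=
    hφ ▸ f.hasCompactSupport.comp_homeomorph (Homeomorph.smulOfNeZero R⁻¹ (by positivity))
  have hvc : ContDiff ℝ 1 (fun x => v x - c) := hv.sub contDiff_const
  have hwd : fderiv ℝ (fun x => φ x * (v x - c)) =
      (fun x => φ x • fderiv ℝ v x) + fun x => (v x - c) • fderiv ℝ φ x := by
    ext1 x
    rw [fderiv_fun_mul (hφc.differentiable one_ne_zero x) (hvc.differentiable one_ne_zero x),
      fderiv_sub_const]
    rfl
  have h1 : eLpNorm (fun x => φ x • fderiv ℝ v x) P volume ≤ eLpNorm (fderiv ℝ v) P volume := by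
    refine eLpNorm_mono fun x => ?_
    rw [norm_smul, hφ, Real.norm_of_nonneg f.nonneg]
    exact mul_le_of_le_one_left (norm_nonneg _) f.le_one
  rw [← hφ] at h2
  have hm1 : AEStronglyMeasurable (fun x => φ x • fderiv ℝ v x) volume :=
    (hφc.continuous.smul (hv.continuous_fderiv one_ne_zero)).aestronglyMeasurable
  have hm2 : AEStronglyMeasurable (fun x => (v x - c) • fderiv ℝ φ x) volume :=
    (hvc.continuous.smul (hφc.continuous_fderiv one_ne_zero)).aestronglyMeasurable
  have h3 : eLpNorm (fderiv ℝ (fun x => φ x * (v x - c))) P volume ≤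
      eLpNorm (fun x => φ x • fderiv ℝ v x) P volume +
        eLpNorm (fun x => (v x - c) • fderiv ℝ φ x) P volume := by
    refine eLpNorm_le_add_of_norm_le (by exact_mod_cast hP) hm1 hm2 fun x => ?_
    rw [hwd]
    exact norm_add_le _ _
  have hw : ContDiff ℝ 1 (fun x => φ x * (v x - c)) := hφc.mul hvc
  have hws : HasCompactSupport (fun x => φ x * (v x - c)) :=
    HasCompactSupport.mul_right (f' := fun x => v x - c) hφs
  have h4 := hS _ hw hws
  have h5 : ∀ x, f (R⁻¹ • x) = φ x := fun x => by rw [hφ]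
  simp only [h5]
  refine h4.trans ?_
  rw [ENNReal.coe_mul, mul_assoc]
  refine mul_le_mul_right (h3.trans ?_) _
  rw [ENNReal.coe_add, add_mul, ENNReal.coe_one, one_mul]
  exact add_le_add h1 h2

/-! ### Weakly differentiable functions -/

lemma sobolev_of_weakGradient {n : ℕ} (hn : 2 ≤ n) {P P' : ℝ≥0} (hP : 1 ≤ P) (hP'0 : P' ≠ 0)
    (hPP' : (P' : ℝ)⁻¹ = (P : ℝ)⁻¹ - (n : ℝ)⁻¹) :
    ∃ A : ℝ≥0, ∀ (u : Euc n → ℝ) (V : Euc n → Fin n → ℝ), HasWeakGradient u V →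
      eLpNorm (fun x => ∑ i, |V x i|) P volume < ⊤ → ∃ lam : ℝ,
        eLpNorm (fun x => u x - lam) P' volume ≤ A * eLpNorm (fun x => ∑ i, |V x i|) P volume := by
  obtain ⟨f, hf1⟩ : ∃ f : ContDiffBump (0 : Euc n), f.rIn = 1 :=
    ⟨⟨1, 2, one_pos, one_lt_two⟩, rfl⟩
  obtain ⟨A, hA⟩ := sobolev_cutoff (by omega : 0 < n) hP hPP' f
  refine ⟨A, fun u V h hV => ?_⟩
  let ψ : ℕ → ContDiffBump (0 : Euc n) := fun k =>
    ⟨((k : ℝ) + 1)⁻¹, 2 * ((k : ℝ) + 1)⁻¹, by positivity,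
      by have : (0 : ℝ) < ((k : ℝ) + 1)⁻¹ := by positivity
         linarith⟩
  set v : ℕ → Euc n → ℝ := fun k =>
    (ψ k).normed volume ⋆[ContinuousLinearMap.lsmul ℝ ℝ, volume] u with hv
  have hηc : ∀ k, ContDiff ℝ (⊤ : ℕ∞) ((ψ k).normed (volume : Measure (Euc n))) :=
    fun k => (ψ k).contDiff_normed
  have hvc : ∀ k, ContDiff ℝ 1 (v k) := fun k =>
    ((ψ k).hasCompactSupport_normed.contDiff_convolution_left _
      ((hηc k).of_le (by exact_mod_cast le_top)) h.1)
  choose c hc using fun k : ℕ => hA (v k) (hvc k) ((k : ℝ) + 1) (by positivity)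
  have : Nontrivial (Fin n) := Fin.nontrivial_iff_two_le.2 hn
  refine exists_const_of_tendsto (μ := (volume : Measure (Euc n)))
    (f := v) (φ := fun k x => f (((k : ℝ) + 1)⁻¹ • x)) (u := u) (lam := c)
    (NeZero.ne _) ?_ ?_ (fun k => (hvc k).continuous.aestronglyMeasurable) ?_ ?_ ?_ ?_
  · exact_mod_cast hP'0
  · finiteness
  · intro k
    exact (f.continuous.comp (by fun_prop : Continuous fun x : Euc n =>
      ((k : ℝ) + 1)⁻¹ • x)).aestronglyMeasurable
  · refine ContDiffBump.ae_convolution_tendsto_right_of_locallyIntegrable (K := 2) ?_ ?_ h.1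
    · have := (tendsto_one_div_add_atTop_nhds_zero_nat (𝕜 := ℝ)).const_mul 2
      simpa [ψ] using this
    · exact Eventually.of_forall fun k => le_rfl
  · intro x
    filter_upwards [eventually_ge_atTop ⌈‖x‖⌉₊] with k hk
    refine f.one_of_mem_closedBall ?_
    have hk' : ‖x‖ ≤ k := Nat.ceil_le.1 hk
    rw [hf1, mem_closedBall_zero_iff, norm_smul, norm_inv, Real.norm_of_nonneg (by positivity),
      inv_mul_le_iff₀ (by positivity)]
    linarith
  · intro k
    refine (hc k).trans ?_
    gcongr
    exact eLpNorm_fderiv_mollify_le hP h (ψ k)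

/-- For 1 ≤ p < n (n ≥ 2) and q = np/(n-p) there is C = C(n,p) such that
for every weakly differentiable u on ℝⁿ with |∇u| ∈ L^p(ℝⁿ) there is λ ∈ ℝ with
‖u − λ‖_{L^q(ℝⁿ)} ≤ C ‖∇u‖_{L^p(ℝⁿ)}. -/
theorem stmt_0 (n : ℕ) (hn : 2 ≤ n) (p : ℝ) (hp1 : 1 ≤ p) (hpn : p < n) :
    ∃ C : ℝ, 0 < C ∧
      ∀ (u : Euc n → ℝ) (V : Euc n → Fin n → ℝ), HasWeakGradient u V →
        eLpNorm (fun x => ∑ i, |V x i|) (ENNReal.ofReal p) volume < ⊤ →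
        ∃ lam : ℝ,
          eLpNorm (fun x => u x - lam) (ENNReal.ofReal ((n * p) / (n - p))) volume ≤
            ENNReal.ofReal C * eLpNorm (fun x => ∑ i, |V x i|) (ENNReal.ofReal p) volume := by
  have hp0 : 0 < p := by linarith
  have hnp : 0 < (n : ℝ) - p := by linarith
  have hn0 : (0 : ℝ) < n := by linarith
  have hq0 : 0 < (n * p) / (n - p) := by positivity
  have hPc : (p.toNNReal : ℝ) = p := Real.coe_toNNReal _ hp0.le
  have hPQ : (((n * p) / (n - p)).toNNReal : ℝ)⁻¹ = (p.toNNReal : ℝ)⁻¹ - (n : ℝ)⁻¹ := by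
    rw [hPc, Real.coe_toNNReal _ hq0.le]
    field_simp
  -- `ENNReal.ofReal p` is by definition the coercion of `p.toNNReal`.
  obtain ⟨A, hA⟩ := sobolev_of_weakGradient hn (Real.one_le_toNNReal.2 hp1)
    (Real.toNNReal_pos.2 hq0).ne' hPQ
  -- `A` itself could be zero, while `C` has to be positive.
  refine ⟨A + 1, by positivity, fun u V h hV => ?_⟩
  obtain ⟨l, hl⟩ := hA u V h hV
  refine ⟨l, hl.trans ?_⟩
  refine mul_le_mul_left ?_ _
  rw [← ENNReal.ofReal_coe_nnreal]
  exact ENNReal.ofReal_le_ofReal (by linarith)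
end
end

section
/- Let p ∈ [1, n), n ≥ 2. There exists a constant C, depending only on n and p, such that for every weakly differentiable function u on ℝⁿ with |∇u| ∈ L^p(ℝⁿ), there exists λ ∈ ℝ with ‖u − λ‖_{L^{np/(n−p), p}(ℝⁿ)} ≤ C ‖∇u‖_{L^p(ℝⁿ)}, where L^{q,p} is the Lorentz space with first index q = np/(n−p) and second index p. -/
/-! The Lorentz functional raised to the power `p` is at most a constant times the dyadic sum
`∑ 2 ^ (k p) |{|f| > 2 ^ k}| ^ (1 - p / n)` over the integers `k` (`lorentzNorm_rpow_le`), so it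
suffices to bound the latter for `f = u - λ`.

For a `C¹` function `w` of compact support this is the truncation argument of Maz'ya
(`exists_dyadicSum_le`). The Sobolev inequality for `1 - χ (w / 2 ^ k)`, where `χ` is a cutoff,
bounds the measure of `{|w| > 2 ^ (k + 1)}` by the integral of `|∇w| ^ p` over
`{2 ^ k < |w| < 2 ^ (k + 1)}`. These sets are disjoint for distinct `k`, so the sum over `k` is at
most a constant times `∫ |∇w| ^ p`. This is where the improvement from `L ^ q` to the Lorentz space
comes from.

A general `u` is approximated almost everywhere by mollifications `v j`, whose gradients are no
larger in `L ^ p` (`exists_smooth_approx`). Subtracting a constant `c j` and cutting off at radius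
`j + 1` turns `v j` into a compactly supported `w j`; by Poincaré's inequality on balls
(`exists_poincare`) this costs only a constant factor, independent of the radius, in the gradient
norm (`exists_compactly_supported_localization`). The `w j` are bounded in `L ^ q` by the Sobolev
inequality, which prevents `|c j|` from tending to infinity (`exists_frequently_bounded`). Along a
subsequence `c j → λ`, hence `w j → u - λ` almost everywhere, and the dyadic sum is lower
semicontinuous under such convergence (`dyadicSum_le_of_tendsto`).
-/

open MeasureTheory ENNReal Set Filter

noncomputable section

/-- Lorentz functional ‖f‖_{p,q} = ( ∫₀^∞ (t^{1/p-1/q} f*(t))^q dt )^{1/q}, for finite q. -/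
def lorentzNorm {α : Type*} [MeasurableSpace α] (μ : Measure α) (p q : ℝ) (f : α → ℝ) : ℝ≥0∞ :=
  (∫⁻ t in Ioi (0 : ℝ), (ENNReal.ofReal (t ^ (1 / p - 1 / q)) * rearr μ f t) ^ q) ^ (1 / q)

/-! ### Rearrangements and dyadic sums -/

/-- The sum `∑ 2 ^ (k p) μ{|f| > 2 ^ k} ^ a` over all integers `k`, with values in `ℝ≥0∞`. For
`a = p / q` it is comparable to the `p`-th power of the Lorentz functional with indices `q, p`,
and unlike the rearrangement it only involves level sets at dyadic heights. -/
def dyadicSum {α : Type*} [MeasurableSpace α] (μ : Measure α) (p a : ℝ) (f : α → ℝ) : ℝ≥0∞ :=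
  ∑' k : ℤ, ((2 : ℝ≥0∞) ^ k) ^ p * μ {x | (2 : ℝ≥0∞) ^ k < ‖f x‖ₑ} ^ a

/-- Where `2 ^ k < f* t ≤ 2 ^ (k + 1)`, already the single term of index `k` on the right bounds
`f* t ^ p`; summing over all `k` avoids having to choose `k` measurably in `t`. -/
lemma rearrE_rpow_le {α : Type*} [MeasurableSpace α] (μ : Measure α) (f : α → ℝ≥0∞) (t : ℝ)
    {p : ℝ} (hp : 0 < p) :
    rearrE μ f t ^ p ≤ ∑' k : ℤ, (2 : ℝ≥0∞) ^ p * (((2 : ℝ≥0∞) ^ k) ^ p *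
      {s : ℝ | ENNReal.ofReal s < μ {x | (2 : ℝ≥0∞) ^ k < f x}}.indicator 1 t) := by
  rw [← ENNReal.le_rpow_inv_iff hp]
  refine le_of_forall_lt_imp_le_of_dense fun l hl => ?_
  rw [ENNReal.le_rpow_inv_iff hp]
  rcases eq_or_ne l 0 with rfl | h0
  · simp [ENNReal.zero_rpow_of_pos hp]
  obtain ⟨k, hk1, hk2⟩ := ENNReal.exists_mem_Ioc_zpow h0 (ne_top_of_lt hl)
    (one_lt_two : (1 : ℝ≥0∞) < 2) ENNReal.ofNat_ne_top
  have hmem : ENNReal.ofReal t < μ {x | (2 : ℝ≥0∞) ^ k < f x} := by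
    by_contra! hcon
    exact (hk1.trans hl).not_ge (sInf_le hcon)
  refine le_trans ?_ (ENNReal.le_tsum k)
  rw [indicator_of_mem (by exact hmem), Pi.one_apply, mul_one, ← ENNReal.mul_rpow_of_nonneg _ _ hp.le]
  gcongr
  rwa [ENNReal.zpow_add two_ne_zero ENNReal.ofNat_ne_top, zpow_one, mul_comm] at hk2

lemma lintegral_power_weight_le {b : ℝ} (hb1 : b < 1) (m : ℝ≥0∞) :
    ∫⁻ t in Ioi (0 : ℝ), ENNReal.ofReal (t ^ (-b)) *
      {s : ℝ | ENNReal.ofReal s < m}.indicator 1 t ≤ ENNReal.ofReal (1 / (1 - b)) * m ^ (1 - b) := by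
  have hpos : 0 < 1 - b := by linarith
  rcases eq_or_ne m ⊤ with rfl | hm
  · rw [ENNReal.top_rpow_of_pos hpos, ENNReal.mul_top]
    · exact le_top
    · simpa using hb1
  have h1 : ∀ t ∈ Ioi (0 : ℝ), ENNReal.ofReal (t ^ (-b)) *
      {s : ℝ | ENNReal.ofReal s < m}.indicator 1 t ≤
      (Ioc 0 m.toReal).indicator (fun t => ENNReal.ofReal (t ^ (-b))) t := by
    intro t ht
    by_cases h : ENNReal.ofReal t < m
    · rw [indicator_of_mem (by exact h), indicator_of_mem, Pi.one_apply, mul_one]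
      exact ⟨ht, ((ENNReal.ofReal_lt_iff_lt_toReal (le_of_lt ht) hm).1 h).le⟩
    · rw [indicator_of_notMem (by exact h)]; simp
  refine (setLIntegral_mono' measurableSet_Ioi h1).trans ?_
  refine (lintegral_mono' Measure.restrict_le_self le_rfl).trans ?_
  rw [lintegral_indicator measurableSet_Ioc]
  have hint : IntervalIntegrable (fun t : ℝ => t ^ (-b)) volume 0 m.toReal :=
    intervalIntegral.intervalIntegrable_rpow' (by linarith)
  rw [← ofReal_integral_eq_lintegral_ofReal
    ((intervalIntegrable_iff_integrableOn_Ioc_of_le toReal_nonneg).1 hint),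
    ← intervalIntegral.integral_of_le toReal_nonneg, integral_rpow (Or.inl (by linarith))]
  · rw [Real.zero_rpow (by linarith), sub_zero, show -b + 1 = 1 - b by ring, div_eq_mul_one_div,
      mul_comm, ENNReal.ofReal_mul (by positivity), ← ENNReal.ofReal_rpow_of_nonneg toReal_nonneg hpos.le,
      ENNReal.ofReal_toReal hm]
  · filter_upwards [ae_restrict_mem measurableSet_Ioc] with t ht
    exact Real.rpow_nonneg ht.1.le _

/-- The dyadic layers of the rearrangement are integrated against the weight `t ^ (-b)`, the `p`-th
power of the Lorentz weight. -/
lemma lorentzNorm_rpow_le {α : Type*} [MeasurableSpace α] (μ : Measure α) (f : α → ℝ)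
    {p q b : ℝ} (hp : 0 < p) (hb1 : b < 1) (hb : p * (1 / q - 1 / p) = -b) :
    lorentzNorm μ q p f ^ p ≤
      (2 ^ p * ENNReal.ofReal (1 / (1 - b))) * dyadicSum μ p (1 - b) f := by
  rw [lorentzNorm, ← ENNReal.rpow_mul, one_div_mul_cancel hp.ne', ENNReal.rpow_one]
  set m : ℤ → ℝ≥0∞ := fun k => μ {x | (2 : ℝ≥0∞) ^ k < ‖f x‖ₑ} with hm
  have hmeas : ∀ k, MeasurableSet {s : ℝ | ENNReal.ofReal s < m k} := fun k =>
    measurableSet_lt ENNReal.measurable_ofReal measurable_const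
  calc ∫⁻ t in Ioi (0 : ℝ), (ENNReal.ofReal (t ^ (1 / q - 1 / p)) * rearr μ f t) ^ p
      ≤ ∫⁻ t in Ioi (0 : ℝ), ∑' k : ℤ, (2 : ℝ≥0∞) ^ p * ((2 : ℝ≥0∞) ^ k) ^ p *
          (ENNReal.ofReal (t ^ (-b)) * {s : ℝ | ENNReal.ofReal s < m k}.indicator 1 t) := by
        refine setLIntegral_mono' measurableSet_Ioi fun t ht => ?_
        rw [ENNReal.mul_rpow_of_nonneg _ _ hp.le,
          ENNReal.ofReal_rpow_of_nonneg (Real.rpow_nonneg (le_of_lt ht) _) hp.le,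
          ← Real.rpow_mul (le_of_lt ht), mul_comm _ p, hb]
        refine (mul_le_mul_right (rearrE_rpow_le μ _ t hp) _).trans_eq ?_
        rw [← ENNReal.tsum_mul_left]
        refine tsum_congr fun k => ?_
        simp only [hm, ← Real.enorm_eq_ofReal_abs]
        ring
    _ = ∑' k : ℤ, (2 : ℝ≥0∞) ^ p * ((2 : ℝ≥0∞) ^ k) ^ p * ∫⁻ t in Ioi (0 : ℝ),
          (ENNReal.ofReal (t ^ (-b)) * {s : ℝ | ENNReal.ofReal s < m k}.indicator 1 t) := by
        have hM : ∀ k, Measurable fun t : ℝ => ENNReal.ofReal (t ^ (-b)) *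
            {s : ℝ | ENNReal.ofReal s < m k}.indicator (1 : ℝ → ℝ≥0∞) t := fun k =>
          (by fun_prop : Measurable fun t : ℝ => ENNReal.ofReal (t ^ (-b))).mul
            (measurable_one.indicator (hmeas k))
        rw [lintegral_tsum fun k => ((hM k).const_mul _).aemeasurable]
        exact tsum_congr fun k => lintegral_const_mul _ (hM k)
    _ ≤ ∑' k : ℤ, (2 : ℝ≥0∞) ^ p * ((2 : ℝ≥0∞) ^ k) ^ p *
          (ENNReal.ofReal (1 / (1 - b)) * m k ^ (1 - b)) := by
        gcongr with k
        exact lintegral_power_weight_le hb1 _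
    _ = _ := by
        rw [dyadicSum, ← ENNReal.tsum_mul_left]
        refine tsum_congr fun k => ?_
        simp only [hm]
        ring

/-- Bounds on the dyadic sum survive almost everywhere limits: the level sets `{|g| > 2 ^ k}` are
open conditions on the value of `g`, so Fatou's lemma applies to each of them and then to the sum
over `k`. -/
lemma dyadicSum_le_of_tendsto {α : Type*} [MeasurableSpace α] {μ : Measure α} {p a : ℝ}
    (ha : 0 < a) {f : ℕ → α → ℝ} {g : α → ℝ} (hf : ∀ j, Measurable (f j))
    (hg : AEMeasurable g μ)
    (hfg : ∀ᵐ x ∂μ, Tendsto (fun j => f j x) atTop (nhds (g x))) {M : ℝ≥0∞}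
    (hM : ∀ j, dyadicSum μ p a (f j) ≤ M) : dyadicSum μ p a g ≤ M := by
  have key : ∀ c : ℝ≥0∞, μ {x | c < ‖g x‖ₑ} ≤ liminf (fun j => μ {x | c < ‖f j x‖ₑ}) atTop := by
    intro c
    have hms : ∀ j, MeasurableSet {x | c < ‖f j x‖ₑ} := fun j =>
      measurableSet_lt measurable_const (hf j).enorm
    have hgs : NullMeasurableSet {x | c < ‖g x‖ₑ} μ := nullMeasurableSet_lt aemeasurable_const hg.enorm
    calc μ {x | c < ‖g x‖ₑ} = ∫⁻ x, {x | c < ‖g x‖ₑ}.indicator 1 x ∂μ := (lintegral_indicator_one₀ hgs).symm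
      _ ≤ ∫⁻ x, liminf (fun j => {x | c < ‖f j x‖ₑ}.indicator (1 : α → ℝ≥0∞) x) atTop ∂μ := by
        refine lintegral_mono_ae ?_
        filter_upwards [hfg] with x hx
        by_cases h : c < ‖g x‖ₑ
        · have hev : ∀ᶠ j in atTop, c < ‖f j x‖ₑ :=
            ((continuous_enorm.tendsto _).comp hx).eventually_const_lt h
          refine le_liminf_of_le (by isBoundedDefault) ?_
          filter_upwards [hev] with j hj
          rw [indicator_of_mem (by exact h), indicator_of_mem (by exact hj)]
        · rw [indicator_of_notMem (by exact h)]; exact zero_le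
      _ ≤ liminf (fun j => ∫⁻ x, {x | c < ‖f j x‖ₑ}.indicator (1 : α → ℝ≥0∞) x ∂μ) atTop :=
        lintegral_liminf_le fun j => measurable_one.indicator (hms j)
      _ = _ := by simp_rw [lintegral_indicator_one (hms _)]
  have key2 : ∀ k : ℤ, ((2 : ℝ≥0∞) ^ k) ^ p * μ {x | (2 : ℝ≥0∞) ^ k < ‖g x‖ₑ} ^ a ≤
      liminf (fun j => ((2 : ℝ≥0∞) ^ k) ^ p * μ {x | (2 : ℝ≥0∞) ^ k < ‖f j x‖ₑ} ^ a) atTop := by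
    intro k
    have hne : ((2 : ℝ≥0∞) ^ k) ^ p ≠ ⊤ := by
      have h0 : (2 : ℝ≥0∞) ^ k ≠ 0 := (ENNReal.zpow_pos two_ne_zero ENNReal.ofNat_ne_top k).ne'
      have h1 : (2 : ℝ≥0∞) ^ k ≠ ⊤ := (ENNReal.zpow_lt_top two_ne_zero ENNReal.ofNat_ne_top k).ne
      exact ENNReal.rpow_ne_top_of_ne_zero h0 h1
    have hmono : Monotone fun y : ℝ≥0∞ => ((2 : ℝ≥0∞) ^ k) ^ p * y ^ a := fun y z h => by
      dsimp only; gcongr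
    have hcont : Continuous fun y : ℝ≥0∞ => ((2 : ℝ≥0∞) ^ k) ^ p * y ^ a :=
      (ENNReal.continuous_const_mul hne).comp ENNReal.continuous_rpow_const
    refine (hmono (key _)).trans_eq ?_
    exact hmono.map_liminf_of_continuousAt _ hcont.continuousAt
  calc dyadicSum μ p a g ≤ ∑' k : ℤ, liminf (fun j => ((2 : ℝ≥0∞) ^ k) ^ p *
        μ {x | (2 : ℝ≥0∞) ^ k < ‖f j x‖ₑ} ^ a) atTop := ENNReal.tsum_le_tsum key2
    _ ≤ liminf (fun j => dyadicSum μ p a (f j)) atTop := by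
      simp only [dyadicSum, ← lintegral_count]
      exact lintegral_liminf_le fun j => measurable_from_top
    _ ≤ M := by
      refine (liminf_le_liminf (Eventually.of_forall hM)).trans_eq (by simp)

/-! ### Maz'ya truncation for compactly supported functions -/

lemma ofReal_two_zpow (k : ℤ) : ENNReal.ofReal ((2 : ℝ) ^ k) = (2 : ℝ≥0∞) ^ k := by
  have h : ((2 : ℝ) ^ k) = (((2 : NNReal) ^ k : NNReal) : ℝ) := by push_cast; rfl
  rw [h, ENNReal.ofReal_coe_nnreal, ENNReal.coe_zpow two_ne_zero]
  rfl

/-- The strict inequalities `1 < ‖x‖ < 2` on the set where the derivative of `χ` is nonzero make the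
gradients of the truncations at different dyadic heights live on disjoint sets. -/
lemma exists_cutoff (E : Type*) [NormedAddCommGroup E] [NormedSpace ℝ E] [HasContDiffBump E]
    [FiniteDimensional ℝ E] :
    ∃ (χ : E → ℝ) (D : NNReal), ContDiff ℝ 1 χ ∧ (∀ x, 0 ≤ χ x ∧ χ x ≤ 1) ∧
      (∀ x, ‖x‖ ≤ 1 → χ x = 1) ∧ (∀ x, 2 ≤ ‖x‖ → χ x = 0) ∧
      (∀ x, ‖fderiv ℝ χ x‖ ≤ D) ∧ (∀ x, fderiv ℝ χ x ≠ 0 → 1 < ‖x‖ ∧ ‖x‖ < 2) := by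
  let φ : ContDiffBump (0 : E) := ⟨1, 2, one_pos, one_lt_two⟩
  have h1 : ∀ x, ‖x‖ ≤ 1 → φ x = 1 := fun x hx => φ.one_of_mem_closedBall (by simpa using hx)
  have h2 : ∀ x, 2 ≤ ‖x‖ → φ x = 0 := fun x hx => φ.zero_of_le_dist (by simpa using hx)
  have hC : ContDiff ℝ 1 (φ : E → ℝ) := φ.contDiff
  obtain ⟨D, hD⟩ := (hC.continuous_fderiv one_ne_zero).bounded_above_of_compact_support
    (φ.hasCompactSupport.fderiv ℝ)
  refine ⟨φ, D.toNNReal, hC, fun x => ⟨φ.nonneg, φ.le_one⟩, h1, h2,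
    fun x => (hD x).trans (Real.le_coe_toNNReal D), fun x hx => ⟨?_, ?_⟩⟩
  -- At the extreme values 0 and 1 of the bump the derivative vanishes by Fermat's theorem.
  · by_contra! h
    refine hx (IsLocalMax.fderiv_eq_zero (Eventually.of_forall fun y => ?_))
    rw [h1 x h]; exact φ.le_one
  · by_contra! h
    refine hx (IsLocalMin.fderiv_eq_zero (Eventually.of_forall fun y => ?_))
    rw [h2 x h]; exact φ.nonneg

/-- The Gagliardo–Nirenberg–Sobolev inequality of Mathlib, raised to the power `p`. -/
lemma exists_gns {n : ℕ} (hn : 2 ≤ n) {p q : ℝ} (hp1 : 1 ≤ p) (hq : q⁻¹ = p⁻¹ - (n : ℝ)⁻¹)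
    (hq0 : 0 < q) :
    ∃ K : NNReal, ∀ w : Euc n → ℝ, ContDiff ℝ 1 w → HasCompactSupport w →
      (∫⁻ x, ‖w x‖ₑ ^ q) ^ (p / q) ≤ (K : ℝ≥0∞) ^ p * ∫⁻ x, ‖fderiv ℝ w x‖ₑ ^ p := by
  have hp0 : 0 < p := by linarith
  refine ⟨eLpNormLESNormFDerivOfEqInnerConst (volume : Measure (Euc n)) p,
    fun w hw hw2 => ?_⟩
  have h := eLpNorm_le_eLpNorm_fderiv_of_eq_inner (volume : Measure (Euc n)) hw hw2
    (p := p.toNNReal) (p' := q.toNNReal) (by simpa using hp1) (by simp; omega)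
    (by simp [hp0.le, hq0.le, hq])
  rw [eLpNorm_eq_lintegral_rpow_enorm_toReal (by simpa using hq0) (by simp),
    eLpNorm_eq_lintegral_rpow_enorm_toReal (by simpa using hp0) (by simp)] at h
  simp only [coe_toReal, Real.coe_toNNReal _ hp0.le, Real.coe_toNNReal _ hq0.le] at h
  have h' := ENNReal.rpow_le_rpow h hp0.le
  rwa [ENNReal.mul_rpow_of_nonneg _ _ hp0.le, ← ENNReal.rpow_mul, ← ENNReal.rpow_mul,
    one_div_mul_cancel hp0.ne', ENNReal.rpow_one, one_div_mul_eq_div] at h'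

/-- The truncation argument of Maz'ya. The Sobolev inequality, applied to the truncation
`1 - χ (w / 2 ^ k)`, is only used through Chebyshev's inequality; since the gradient of this
truncation is carried by `{2 ^ k < |w| < 2 ^ (k + 1)}`, the estimates add up over `k` without
loss. -/
lemma exists_dyadicSum_le {n : ℕ} (hn : 2 ≤ n) {p : ℝ} (hp1 : 1 ≤ p) (hpn : p < n) :
    ∃ C : NNReal, ∀ w : Euc n → ℝ, ContDiff ℝ 1 w → HasCompactSupport w →
      dyadicSum volume p (1 - p / n) w ≤ C * ∫⁻ x, ‖fderiv ℝ w x‖ₑ ^ p := by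
  have hp0 : 0 < p := by linarith
  have hn0 : (0 : ℝ) < n := by linarith
  have hnp : (0 : ℝ) < n - p := by linarith
  obtain ⟨K, hK⟩ := exists_gns hn hp1 (q := n * p / (n - p)) (by field_simp) (by positivity)
  set q : ℝ := n * p / (n - p) with hqdef
  have hq0 : 0 < q := by positivity
  have ha : 1 - p / n = p / q := by rw [hqdef]; field_simp
  obtain ⟨χ, D, hχ, -, hχ1, hχ2, hχD, hχs⟩ := exists_cutoff ℝ
  refine ⟨(2 * K * D) ^ p, fun w hw hw2 => ?_⟩
  have hdw : Continuous (fderiv ℝ w) := hw.continuous_fderiv one_ne_zero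
  let A : ℤ → Set (Euc n) := fun k => {x | (2 : ℝ) ^ k < ‖w x‖ ∧ ‖w x‖ < 2 ^ (k + 1)}
  have hA : ∀ k, MeasurableSet (A k) := fun k =>
    (measurableSet_lt measurable_const hw.continuous.norm.measurable).inter
      (measurableSet_lt hw.continuous.norm.measurable measurable_const)
  have hdisj : Pairwise (Function.onFun Disjoint A) := by
    have aux : ∀ i j : ℤ, i < j → Disjoint (A i) (A j) := by
      intro i j hij
      rw [Set.disjoint_left]
      intro x hi hj
      have : (2 : ℝ) ^ (i + 1) ≤ 2 ^ j := zpow_le_zpow_right₀ one_le_two (by omega)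
      exact absurd (hi.2.trans_le this) hj.1.not_gt
    intro i j hij
    rcases lt_or_gt_of_ne hij with h | h
    · exact aux i j h
    · exact (aux j i h).symm
  have step : ∀ k : ℤ, ((2 : ℝ≥0∞) ^ (k + 1)) ^ p *
      volume {x | (2 : ℝ≥0∞) ^ (k + 1) < ‖w x‖ₑ} ^ (p / q) ≤
      (2 * K * D : ℝ≥0∞) ^ p * ∫⁻ x in A k, ‖fderiv ℝ w x‖ₑ ^ p := by
    intro k
    set c : ℝ := ((2 : ℝ) ^ k)⁻¹ with hc
    have hc0 : 0 < c := by positivity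
    let f : Euc n → ℝ := fun x => 1 - χ (c * w x)
    have hf : ContDiff ℝ 1 f := contDiff_const.sub (hχ.comp (contDiff_const.mul hw))
    have hfs : HasCompactSupport f :=
      hw2.comp_left (g := fun s => 1 - χ (c * s)) (by simp [hχ1])
    have hfd : ∀ x, ‖fderiv ℝ f x‖ₑ ^ p ≤
        (A k).indicator (fun x => (D * ENNReal.ofReal c) ^ p * ‖fderiv ℝ w x‖ₑ ^ p) x := by
      intro x
      have h1 : HasFDerivAt f
          (-((fderiv ℝ χ (c * w x)).comp (c • fderiv ℝ w x))) x := by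
        have hd1 := (hw.differentiable one_ne_zero x).hasFDerivAt.const_mul c
        exact (((hχ.differentiable one_ne_zero _).hasFDerivAt).comp x hd1).const_sub 1
      rw [h1.fderiv]
      by_cases hx : x ∈ A k
      · rw [indicator_of_mem hx, ← ENNReal.mul_rpow_of_nonneg _ _ hp0.le, enorm_neg]
        gcongr
        calc _ ≤ ‖fderiv ℝ χ (c * w x)‖ₑ * ‖c • fderiv ℝ w x‖ₑ :=
              ContinuousLinearMap.opENorm_comp_le _ _
          _ ≤ D * (ENNReal.ofReal c * ‖fderiv ℝ w x‖ₑ) := by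
              rw [enorm_smul, Real.enorm_of_nonneg hc0.le]
              gcongr
              exact enorm_le_coe.2 (hχD _)
          _ = _ := by ring
      · have h0 : fderiv ℝ χ (c * w x) = 0 := by
          by_contra hne
          have := hχs _ hne
          rw [norm_mul, Real.norm_of_nonneg hc0.le, hc, inv_mul_eq_div,
            one_lt_div (by positivity), div_lt_iff₀ (by positivity)] at this
          refine hx ⟨this.1, ?_⟩
          rw [zpow_add₀ two_ne_zero, zpow_one, mul_comm]
          exact this.2
        rw [h0, ContinuousLinearMap.zero_comp, neg_zero]
        have h00 : ‖(0 : Euc n →L[ℝ] ℝ)‖ₑ ^ p = 0 := by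
          rw [← ofReal_norm, norm_zero, ENNReal.ofReal_zero, ENNReal.zero_rpow_of_pos hp0]
        exact h00.trans_le zero_le
    -- On `{|w| > 2 ^ (k + 1)}` the truncation `f` equals `1`, so Chebyshev's inequality applies.
    have hmark : volume {x | (2 : ℝ≥0∞) ^ (k + 1) < ‖w x‖ₑ} ≤ ∫⁻ x, ‖f x‖ₑ ^ q := by
      refine meas_le_lintegral₀ (hf.continuous.enorm.measurable.pow_const q).aemeasurable ?_
      intro x hx
      have hx' : (2 : ℝ) ^ (k + 1) < ‖w x‖ := by
        have : ENNReal.ofReal ((2 : ℝ) ^ (k + 1)) < ENNReal.ofReal ‖w x‖ := by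
          rw [ofReal_norm, ofReal_two_zpow]
          exact hx
        exact (ENNReal.ofReal_lt_ofReal_iff_of_nonneg (by positivity)).1 this
      have h1 : f x = 1 := by
        have : χ (c * w x) = 0 := by
          apply hχ2
          rw [norm_mul, Real.norm_of_nonneg hc0.le, hc, inv_mul_eq_div, le_div_iff₀ (by positivity)]
          rw [zpow_add₀ two_ne_zero, zpow_one, mul_comm] at hx'
          exact hx'.le
        simp [f, this]
      simp [h1]
    have hc2 : ENNReal.ofReal c = ((2 : ℝ≥0∞) ^ k)⁻¹ := by
      rw [hc, ENNReal.ofReal_inv_of_pos (by positivity), ofReal_two_zpow]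
    have h20 : (2 : ℝ≥0∞) ^ k ≠ 0 := (ENNReal.zpow_pos two_ne_zero ENNReal.ofNat_ne_top k).ne'
    have h2t : (2 : ℝ≥0∞) ^ k ≠ ⊤ := (ENNReal.zpow_lt_top two_ne_zero ENNReal.ofNat_ne_top k).ne
    calc ((2 : ℝ≥0∞) ^ (k + 1)) ^ p * volume {x | (2 : ℝ≥0∞) ^ (k + 1) < ‖w x‖ₑ} ^ (p / q)
        ≤ ((2 : ℝ≥0∞) ^ (k + 1)) ^ p * (∫⁻ x, ‖f x‖ₑ ^ q) ^ (p / q) := by gcongr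
      _ ≤ ((2 : ℝ≥0∞) ^ (k + 1)) ^ p * ((K : ℝ≥0∞) ^ p * ∫⁻ x, (A k).indicator
            (fun x => (D * ENNReal.ofReal c) ^ p * ‖fderiv ℝ w x‖ₑ ^ p) x) := by
          refine mul_le_mul_right ((hK f hf hfs).trans (mul_le_mul_right (lintegral_mono hfd) _)) _
      _ = _ := by
          rw [lintegral_indicator (hA k), lintegral_const_mul _ (hdw.enorm.measurable.pow_const p),
            ← mul_assoc, ← mul_assoc, ← ENNReal.mul_rpow_of_nonneg _ _ hp0.le,
            ← ENNReal.mul_rpow_of_nonneg _ _ hp0.le, hc2,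
            ENNReal.zpow_add two_ne_zero ENNReal.ofNat_ne_top, zpow_one]
          congr 2
          calc (2 : ℝ≥0∞) ^ k * 2 * K * (D * ((2 : ℝ≥0∞) ^ k)⁻¹)
              = 2 * K * D * ((2 : ℝ≥0∞) ^ k * ((2 : ℝ≥0∞) ^ k)⁻¹) := by ring
            _ = _ := by rw [ENNReal.mul_inv_cancel h20 h2t, mul_one]
  calc dyadicSum volume p (1 - p / n) w
      = ∑' k : ℤ, ((2 : ℝ≥0∞) ^ (k + 1)) ^ p *
          volume {x | (2 : ℝ≥0∞) ^ (k + 1) < ‖w x‖ₑ} ^ (p / q) := by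
        rw [dyadicSum, ha]
        exact ((Equiv.addRight (1 : ℤ)).tsum_eq (fun k : ℤ => ((2 : ℝ≥0∞) ^ k) ^ p *
          volume {x | (2 : ℝ≥0∞) ^ k < ‖w x‖ₑ} ^ (p / q))).symm
    _ ≤ ∑' k : ℤ, (2 * K * D : ℝ≥0∞) ^ p * ∫⁻ x in A k, ‖fderiv ℝ w x‖ₑ ^ p :=
        ENNReal.tsum_le_tsum step
    _ = (2 * K * D : ℝ≥0∞) ^ p * ∫⁻ x in ⋃ k, A k, ‖fderiv ℝ w x‖ₑ ^ p := by
        rw [ENNReal.tsum_mul_left, lintegral_iUnion hA hdisj]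
    _ ≤ (2 * K * D : ℝ≥0∞) ^ p * ∫⁻ x, ‖fderiv ℝ w x‖ₑ ^ p := by
        gcongr
        exact Measure.restrict_le_self
    _ = _ := by
        congr 1
        rw [ENNReal.coe_rpow_of_nonneg _ hp0.le]
        push_cast
        rfl

/-! ### Poincaré's inequality on balls -/

/-- Jensen's inequality for the power `p` and a probability measure. -/
lemma lintegral_rpow_le_lintegral_rpow {α : Type*} [MeasurableSpace α] (ν : Measure α)
    [IsProbabilityMeasure ν] {p : ℝ} (hp : 1 ≤ p) {f : α → ℝ≥0∞} (hf : Measurable f) :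
    (∫⁻ x, f x ∂ν) ^ p ≤ ∫⁻ x, f x ^ p ∂ν := by
  have hp0 : 0 < p := by linarith
  have h := eLpNorm'_le_eLpNorm'_of_exponent_le one_pos hp ν hf.aestronglyMeasurable
  rw [eLpNorm'_eq_lintegral_enorm, eLpNorm'_eq_lintegral_enorm] at h
  simp only [enorm_eq_self, ENNReal.rpow_one, div_one] at h
  rwa [one_div, ENNReal.le_rpow_inv_iff hp0] at h

lemma lintegral_comp_add_smul {n : ℕ} (a : Euc n) {t : ℝ} (ht : 0 < t) {F : Euc n → ℝ≥0∞}
    (hF : Measurable F) :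
    ∫⁻ y, F (a + t • y) = ENNReal.ofReal ((t ^ n)⁻¹) * ∫⁻ y, F y := by
  have h1 : Measurable fun y : Euc n => F (a + y) := hF.comp (measurable_const_add a)
  calc ∫⁻ y, F (a + t • y) = ∫⁻ y, F (a + y) ∂(Measure.map (t • ·) volume) :=
        (lintegral_map h1 (measurable_const_smul t)).symm
    _ = _ := by
        rw [Measure.map_addHaar_smul _ ht.ne', lintegral_smul_measure, lintegral_add_left_eq_self]
        simp [abs_of_pos ht]

/-- For `t ≥ 1 / 2` the map `y ↦ z + t (y - z)` sends the ball into itself and has Jacobian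
`t ^ n ≥ 2 ^ (-n)`. -/
lemma lintegral_ball_segment_le {n : ℕ} {R : ℝ} {H : Euc n → ℝ≥0∞} (hH : Measurable H)
    {z : Euc n} (hz : z ∈ Metric.ball (0 : Euc n) R) {t : ℝ} (ht : 1 / 2 ≤ t) (ht1 : t ≤ 1) :
    ∫⁻ y in Metric.ball (0 : Euc n) R, H (z + t • (y - z)) ≤
      2 ^ n * ∫⁻ y in Metric.ball (0 : Euc n) R, H y := by
  have ht0 : 0 < t := by linarith
  set B := Metric.ball (0 : Euc n) R
  calc ∫⁻ y in B, H (z + t • (y - z)) ≤ ∫⁻ y in B, B.indicator H ((z - t • z) + t • y) := by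
        refine setLIntegral_mono' Metric.isOpen_ball.measurableSet fun y hy => ?_
        have hmem : z + t • (y - z) ∈ B :=
          (convex_ball (0 : Euc n) R).add_smul_sub_mem hz hy ⟨ht0.le, ht1⟩
        have heq : (z - t • z) + t • y = z + t • (y - z) := by rw [smul_sub]; abel
        rw [heq, indicator_of_mem hmem]
    _ ≤ ∫⁻ y, B.indicator H ((z - t • z) + t • y) :=
        lintegral_mono' Measure.restrict_le_self le_rfl
    _ = ENNReal.ofReal ((t ^ n)⁻¹) * ∫⁻ y in B, H y := by
        rw [lintegral_comp_add_smul _ ht0 (hH.indicator Metric.isOpen_ball.measurableSet),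
          lintegral_indicator Metric.isOpen_ball.measurableSet]
    _ ≤ _ := by
        gcongr
        calc ENNReal.ofReal ((t ^ n)⁻¹) ≤ ENNReal.ofReal (2 ^ n) := by
              apply ENNReal.ofReal_le_ofReal
              rw [← inv_pow]
              gcongr
              rw [inv_le_comm₀ ht0 two_pos]; linarith
          _ = 2 ^ n := by rw [ENNReal.ofReal_pow two_pos.le]; simp

/-- The bound is uniform in `t`: a point of the segment from `x` to `y` is at least half the segment
away from one of the endpoints, and that endpoint serves as the centre of the contraction in
`lintegral_ball_segment_le` after exchanging the roles of `x` and `y` if necessary. -/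
lemma lintegral_ball_ball_segment_le {n : ℕ} {R : ℝ} {H : Euc n → ℝ≥0∞} (hH : Measurable H)
    {t : ℝ} (ht0 : 0 ≤ t) (ht1 : t ≤ 1) :
    ∫⁻ x in Metric.ball (0 : Euc n) R, ∫⁻ y in Metric.ball (0 : Euc n) R, H (x + t • (y - x)) ≤
      (2 ^ n * ∫⁻ y in Metric.ball (0 : Euc n) R, H y) * volume (Metric.ball (0 : Euc n) R) := by
  have hB : MeasurableSet (Metric.ball (0 : Euc n) R) := Metric.isOpen_ball.measurableSet
  rcases le_total (1 / 2) t with h | h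
  · refine (setLIntegral_mono' hB fun x hx => lintegral_ball_segment_le hH hx h ht1).trans_eq ?_
    rw [setLIntegral_const]
  · rw [lintegral_lintegral_swap]
    · refine (setLIntegral_mono' hB fun y hy => ?_).trans_eq (setLIntegral_const _ _)
      have heq : ∀ x : Euc n, x + t • (y - x) = y + (1 - t) • (x - y) := by
        intro x
        module
      simp_rw [heq]
      exact lintegral_ball_segment_le hH hy (by linarith) (by linarith)
    · refine Measurable.aemeasurable (hH.comp ?_)
      exact (by fun_prop : Continuous fun z : Euc n × Euc n => z.1 + t • (z.2 - z.1)).measurable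

lemma enorm_sub_rpow_le_segment {n : ℕ} {p : ℝ} (hp : 1 ≤ p) {u : Euc n → ℝ}
    (hu : ContDiff ℝ 1 u) {R : ℝ} {x y : Euc n} (hx : x ∈ Metric.ball (0 : Euc n) R)
    (hy : y ∈ Metric.ball (0 : Euc n) R) :
    ‖u y - u x‖ₑ ^ p ≤ ENNReal.ofReal (2 * R) ^ p *
      ∫⁻ t in Icc (0 : ℝ) 1, ‖fderiv ℝ u (x + t • (y - x))‖ₑ ^ p := by
  have hp0 : 0 ≤ p := by linarith
  have hline : ContDiff ℝ 1 fun t : ℝ => x + t • (y - x) := by fun_prop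
  have hdu : Continuous fun t : ℝ => fderiv ℝ u (x + t • (y - x)) :=
    (hu.continuous_fderiv one_ne_zero).comp hline.continuous
  have h := enorm_sub_le_lintegral_deriv_of_contDiffOn_Icc
    (hu.comp hline).contDiffOn (zero_le_one (α := ℝ))
  simp only [Function.comp_apply, one_smul, zero_smul, add_zero, add_sub_cancel] at h
  have hd : ∀ t : ℝ, ‖deriv (u ∘ fun t : ℝ => x + t • (y - x)) t‖ₑ ≤
      ENNReal.ofReal (2 * R) * ‖fderiv ℝ u (x + t • (y - x))‖ₑ := by
    intro t
    have hl : HasDerivAt (fun t : ℝ => x + t • (y - x)) (y - x) t := by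
      simpa using ((hasDerivAt_id t).smul_const (y - x)).const_add x
    rw [((hu.differentiable one_ne_zero _).hasFDerivAt.comp_hasDerivAt t hl).deriv, mul_comm]
    refine (ContinuousLinearMap.le_opENorm _ _).trans ?_
    gcongr
    rw [← ofReal_norm]
    apply ENNReal.ofReal_le_ofReal
    rw [mem_ball_zero_iff] at hx hy
    linarith [norm_sub_le y x]
  have : IsProbabilityMeasure (volume.restrict (Icc (0 : ℝ) 1)) := ⟨by simp⟩
  calc ‖u y - u x‖ₑ ^ p ≤ (∫⁻ t in Icc (0 : ℝ) 1,
        ENNReal.ofReal (2 * R) * ‖fderiv ℝ u (x + t • (y - x))‖ₑ) ^ p := by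
        gcongr
        exact h.trans (lintegral_mono hd)
    _ = ENNReal.ofReal (2 * R) ^ p *
        (∫⁻ t in Icc (0 : ℝ) 1, ‖fderiv ℝ u (x + t • (y - x))‖ₑ) ^ p := by
        rw [lintegral_const_mul _ hdu.enorm.measurable, ENNReal.mul_rpow_of_nonneg _ _ hp0]
    _ ≤ _ := by
        gcongr
        exact lintegral_rpow_le_lintegral_rpow _ hp hdu.enorm.measurable

/-- Poincaré's inequality on balls, with the explicit dependence on the radius that the cutoff
argument needs. The constant is the value of `u` at a point `x` where `∫ |u y - u x| ^ p dy` does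
not exceed its mean over `x`, so that no average of `u` enters. -/
lemma exists_poincare {n : ℕ} {p : ℝ} (hp : 1 ≤ p) {u : Euc n → ℝ} (hu : ContDiff ℝ 1 u)
    {R : ℝ} (hR : 0 < R) :
    ∃ c : ℝ, ∫⁻ y in Metric.ball (0 : Euc n) R, ‖u y - c‖ₑ ^ p ≤
      ENNReal.ofReal (2 * R) ^ p * 2 ^ n *
        ∫⁻ y in Metric.ball (0 : Euc n) R, ‖fderiv ℝ u y‖ₑ ^ p := by
  set B := Metric.ball (0 : Euc n) R with hBdef
  have hB : MeasurableSet B := Metric.isOpen_ball.measurableSet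
  have hB0 : volume B ≠ 0 := (Metric.measure_ball_pos _ _ hR).ne'
  have hBt : volume B ≠ ⊤ := measure_ball_lt_top.ne
  set H : Euc n → ℝ≥0∞ := fun x => ‖fderiv ℝ u x‖ₑ ^ p with hHdef
  have hH : Measurable H := (hu.continuous_fderiv one_ne_zero).enorm.measurable.pow_const p
  have hseg : ∀ x ∈ B, ∀ y ∈ B, ‖u y - u x‖ₑ ^ p ≤ ENNReal.ofReal (2 * R) ^ p *
      ∫⁻ t in Icc (0 : ℝ) 1, H (x + t • (y - x)) := fun x hx y hy =>
    enorm_sub_rpow_le_segment hp hu hx hy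
  -- Forgetting the definition of `H` keeps the measurability proofs below from unfolding derivatives.
  clear_value H
  have hm1 : Measurable fun z : Euc n × Euc n => ‖u z.2 - u z.1‖ₑ ^ p :=
    Measurable.pow_const (Continuous.measurable
      (((hu.continuous.comp continuous_snd).sub (hu.continuous.comp continuous_fst)).enorm)) p
  have hm2 : Measurable fun z : (Euc n × ℝ) × Euc n => H (z.1.1 + z.1.2 • (z.2 - z.1.1)) :=
    hH.comp (by fun_prop : Continuous fun z : (Euc n × ℝ) × Euc n =>
      z.1.1 + z.1.2 • (z.2 - z.1.1)).measurable
  have hm3 : Measurable fun z : Euc n × ℝ => ∫⁻ y in B, H (z.1 + z.2 • (y - z.1)) :=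
    hm2.lintegral_prod_right'
  have hm4 : Measurable fun z : Euc n × Euc n => ∫⁻ t in Icc (0 : ℝ) 1, H (z.1 + t • (z.2 - z.1)) := by
    have : Measurable fun z : (Euc n × Euc n) × ℝ => H (z.1.1 + z.2 • (z.1.2 - z.1.1)) :=
      hH.comp (by fun_prop : Continuous fun z : (Euc n × Euc n) × ℝ =>
        z.1.1 + z.2 • (z.1.2 - z.1.1)).measurable
    exact this.lintegral_prod_right'
  have hmean : ∫⁻ x in B, ∫⁻ y in B, ‖u y - u x‖ₑ ^ p ≤
      ENNReal.ofReal (2 * R) ^ p * ((2 ^ n * ∫⁻ y in B, H y) * volume B) := by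
    calc ∫⁻ x in B, ∫⁻ y in B, ‖u y - u x‖ₑ ^ p
        ≤ ∫⁻ x in B, ENNReal.ofReal (2 * R) ^ p *
            ∫⁻ y in B, ∫⁻ t in Icc (0 : ℝ) 1, H (x + t • (y - x)) := by
          refine setLIntegral_mono' hB fun x hx => ?_
          have hm5 : Measurable fun y => ∫⁻ t in Icc (0 : ℝ) 1, H (x + t • (y - x)) :=
            hm4.comp (measurable_prodMk_left (x := x))
          rw [← lintegral_const_mul _ hm5]
          exact setLIntegral_mono' hB fun y hy => hseg x hx y hy
      _ = ENNReal.ofReal (2 * R) ^ p *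
            ∫⁻ x in B, ∫⁻ y in B, ∫⁻ t in Icc (0 : ℝ) 1, H (x + t • (y - x)) :=
          lintegral_const_mul _ hm4.lintegral_prod_right'
      _ = ENNReal.ofReal (2 * R) ^ p *
            ∫⁻ x in B, ∫⁻ t in Icc (0 : ℝ) 1, ∫⁻ y in B, H (x + t • (y - x)) := by
          congr 1
          refine lintegral_congr fun x => lintegral_lintegral_swap (Measurable.aemeasurable ?_)
          exact hH.comp (by fun_prop : Continuous fun z : Euc n × ℝ =>
            x + z.2 • (z.1 - x)).measurable
      _ = ENNReal.ofReal (2 * R) ^ p *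
            ∫⁻ t in Icc (0 : ℝ) 1, ∫⁻ x in B, ∫⁻ y in B, H (x + t • (y - x)) := by
          congr 1
          exact lintegral_lintegral_swap hm3.aemeasurable
      _ ≤ ENNReal.ofReal (2 * R) ^ p *
            ∫⁻ t in Icc (0 : ℝ) 1, (2 ^ n * ∫⁻ y in B, H y) * volume B := by
          refine mul_le_mul_right (setLIntegral_mono' measurableSet_Icc fun t ht => ?_) _
          exact lintegral_ball_ball_segment_le hH ht.1 ht.2
      _ = _ := by rw [setLIntegral_const]; simp
  obtain ⟨x, -, hx⟩ := exists_le_setLAverage hB0 hBt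
    (hm1.lintegral_prod_right' (ν := volume.restrict B)).aemeasurable
  refine ⟨u x, hx.trans ?_⟩
  rw [setLAverage_eq]
  refine (ENNReal.div_le_div_right hmean _).trans_eq ?_
  rw [← mul_assoc, ← mul_assoc, ENNReal.mul_div_cancel_right hB0 hBt]

/-! ### Mollification of weakly differentiable functions -/

lemma opNorm_le_sum_apply_single {n : ℕ} (L : Euc n →L[ℝ] ℝ) :
    ‖L‖ ≤ ∑ i, |L (EuclideanSpace.single i 1)| := by
  refine L.opNorm_le_bound (Finset.sum_nonneg fun i _ => abs_nonneg _) fun v => ?_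
  have hv : v = ∑ i, v i • EuclideanSpace.single i (1 : ℝ) := by
    have := (EuclideanSpace.basisFun (Fin n) ℝ).sum_repr v
    simpa using this.symm
  calc ‖L v‖ = ‖∑ i, v i * L (EuclideanSpace.single i 1)‖ := by
        conv_lhs => rw [hv]
        rw [map_sum]
        simp only [map_smul, smul_eq_mul]
    _ ≤ ∑ i, ‖v i * L (EuclideanSpace.single i 1)‖ := norm_sum_le _ _
    _ ≤ ∑ i, |L (EuclideanSpace.single i 1)| * ‖v‖ := by
        refine Finset.sum_le_sum fun i _ => ?_
        rw [norm_mul, mul_comm]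
        exact mul_le_mul_of_nonneg_left (PiLp.norm_apply_le v i) (norm_nonneg _)
    _ = _ := by rw [Finset.sum_mul]

lemma lintegral_average_translate_rpow_le {n : ℕ} (ν : Measure (Euc n)) [IsProbabilityMeasure ν]
    {p : ℝ} (hp : 1 ≤ p) {W : Euc n → ℝ≥0∞} (hW : Measurable W) :
    ∫⁻ x, (∫⁻ t, W (x - t) ∂ν) ^ p ≤ ∫⁻ x, W x ^ p := by
  have hm : Measurable fun z : Euc n × Euc n => W (z.1 - z.2) ^ p :=
    (hW.comp measurable_sub).pow_const p
  calc ∫⁻ x, (∫⁻ t, W (x - t) ∂ν) ^ p ≤ ∫⁻ x, ∫⁻ t, W (x - t) ^ p ∂ν :=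
        lintegral_mono fun x =>
          lintegral_rpow_le_lintegral_rpow ν hp (hW.comp (measurable_const_sub x))
    _ = ∫⁻ t, (∫⁻ x, W (x - t) ^ p) ∂ν := lintegral_lintegral_swap hm.aemeasurable
    _ = ∫⁻ t, (∫⁻ x, W x ^ p) ∂ν :=
        lintegral_congr fun t => lintegral_sub_right_eq_self (fun x => W x ^ p) t
    _ = _ := by simp

open scoped Convolution in
/-- The derivative of the mollification of `u` is the mollification of the weak gradient, because
`s ↦ ρ (x - s)` is an admissible test function. -/
lemma fderiv_mollify_apply {n : ℕ} {u : Euc n → ℝ} {V : Euc n → Fin n → ℝ}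
    (h : HasWeakGradient u V) (φ : ContDiffBump (0 : Euc n)) (x : Euc n) (i : Fin n) :
    fderiv ℝ (φ.normed volume ⋆[ContinuousLinearMap.lsmul ℝ ℝ, volume] u) x
      (EuclideanSpace.single i 1) = ∫ s, V s i * φ.normed volume (x - s) := by
  set ρ := φ.normed (volume : Measure (Euc n)) with hρ
  have hρC : ContDiff ℝ (⊤ : ℕ∞) ρ := φ.contDiff_normed
  have hρ1 : ContDiff ℝ 1 ρ := φ.contDiff_normed
  have hρs : HasCompactSupport ρ := φ.hasCompactSupport_normed
  rw [← convolution_flip]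
  rw [(hρs.hasFDerivAt_convolution_right (ContinuousLinearMap.lsmul ℝ ℝ).flip h.1 hρ1 x).fderiv]
  rw [convolution_precompR_apply _ h.1 (hρs.fderiv ℝ) (hρ1.continuous_fderiv one_ne_zero)]
  have hder : ∀ s, fderiv ℝ (fun s => ρ (x - s)) s (EuclideanSpace.single i 1) =
      - fderiv ℝ ρ (x - s) (EuclideanSpace.single i 1) := by
    intro s
    have h1 : HasFDerivAt (fun s => x - s) (-(ContinuousLinearMap.id ℝ (Euc n))) s :=
      (hasFDerivAt_id s).const_sub x
    have h2 := ((hρ1.differentiable one_ne_zero (x - s)).hasFDerivAt).comp s h1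
    have h3 : fderiv ℝ (fun s => ρ (x - s)) s = _ := h2.fderiv
    rw [h3]
    simp
  -- The reflected mollifier is tested against the weak gradient; the sign from differentiating
  -- `x - s` cancels the sign in the definition of the weak gradient.
  have htest := h.2.2 (fun s => ρ (x - s)) (hρC.comp (contDiff_const.sub contDiff_id))
    (hρs.comp_homeomorph (Homeomorph.subLeft x)) i
  simp only [hder, mul_neg, integral_neg, neg_inj] at htest
  rw [← htest, convolution_def]
  simp [mul_comm]

open scoped Convolution in
/-- Mollification does not increase the `L ^ p` norm of the gradient: it is an average of translates
against the probability measure with density the mollifier. -/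
lemma lintegral_fderiv_mollify_le {n : ℕ} {u : Euc n → ℝ} {V : Euc n → Fin n → ℝ}
    (h : HasWeakGradient u V) (φ : ContDiffBump (0 : Euc n)) {p : ℝ} (hp : 1 ≤ p) :
    ∫⁻ x, ‖fderiv ℝ (φ.normed volume ⋆[ContinuousLinearMap.lsmul ℝ ℝ, volume] u) x‖ₑ ^ p ≤
      ∫⁻ x, ‖∑ i, |V x i|‖ₑ ^ p := by
  set ρ := φ.normed (volume : Measure (Euc n)) with hρ
  have hρc : Continuous ρ := φ.continuous_normed
  have hVm : ∀ i, AEMeasurable (fun x => V x i) volume := fun i =>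
    (h.2.1 i).aestronglyMeasurable.aemeasurable
  have hWm : AEMeasurable (fun x => ‖∑ i, |V x i|‖ₑ) volume := by
    refine AEMeasurable.enorm ?_
    exact Finset.aemeasurable_fun_sum _ fun i _ => (hVm i).abs
  set W := hWm.mk with hW
  have hWM : Measurable W := hWm.measurable_mk
  let ν : Measure (Euc n) := volume.withDensity fun t => ‖ρ t‖ₑ
  have hν : IsProbabilityMeasure ν := by
    constructor
    rw [withDensity_apply _ MeasurableSet.univ, Measure.restrict_univ,
      ← ofReal_integral_norm_eq_lintegral_enorm φ.integrable_normed]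
    have : ∫ t, ‖ρ t‖ = 1 := by
      rw [← φ.integral_normed (μ := volume)]
      exact integral_congr_ae (Eventually.of_forall fun t => Real.norm_of_nonneg (φ.nonneg_normed t))
    rw [this, ENNReal.ofReal_one]
  have hpt : ∀ x, ‖fderiv ℝ (ρ ⋆[ContinuousLinearMap.lsmul ℝ ℝ, volume] u) x‖ₑ ≤
      ∫⁻ t, W (x - t) ∂ν := by
    intro x
    calc _ ≤ ‖∑ i, |fderiv ℝ (ρ ⋆[ContinuousLinearMap.lsmul ℝ ℝ, volume] u) x
            (EuclideanSpace.single i 1)|‖ₑ := by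
          rw [enorm_le_iff_norm_le, Real.norm_of_nonneg (r := ∑ i, _)
            (Finset.sum_nonneg fun i _ => abs_nonneg _)]
          exact opNorm_le_sum_apply_single _
      _ ≤ ∑ i, ‖|fderiv ℝ (ρ ⋆[ContinuousLinearMap.lsmul ℝ ℝ, volume] u) x
            (EuclideanSpace.single i 1)|‖ₑ := enorm_sum_le _ _
      _ ≤ ∑ i, ∫⁻ s, ‖V s i‖ₑ * ‖ρ (x - s)‖ₑ := by
          refine Finset.sum_le_sum fun i _ => ?_
          rw [Real.enorm_abs, fderiv_mollify_apply h φ x i]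
          refine (enorm_integral_le_lintegral_enorm _).trans_eq ?_
          simp [enorm_mul, hρ]
      _ = ∫⁻ s, ∑ i, ‖V s i‖ₑ * ‖ρ (x - s)‖ₑ := by
          rw [lintegral_finsetSum']
          intro i _
          exact (hVm i).enorm.mul
            ((hρc.comp (continuous_const.sub continuous_id)).enorm.measurable.aemeasurable)
      _ = ∫⁻ s, W s * ‖ρ (x - s)‖ₑ := by
          refine lintegral_congr_ae ?_
          filter_upwards [hWm.ae_eq_mk] with s hs
          rw [hW, ← hs, ← Finset.sum_mul]
          congr 1
          rw [Real.enorm_of_nonneg (Finset.sum_nonneg fun i _ => abs_nonneg _),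
            ENNReal.ofReal_sum_of_nonneg fun i _ => abs_nonneg _]
          simp only [Real.enorm_eq_ofReal_abs]
      _ = ∫⁻ t, W (x - t) * ‖ρ t‖ₑ := by
          rw [← lintegral_sub_left_eq_self _ x]
          simp
      _ = _ := by
          have hWx : Measurable fun t => W (x - t) := hWM.comp (measurable_const_sub x)
          rw [lintegral_withDensity_eq_lintegral_mul _ hρc.enorm.measurable hWx]
          simp [mul_comm]
  calc _ ≤ ∫⁻ x, (∫⁻ t, W (x - t) ∂ν) ^ p :=
        lintegral_mono fun x => ENNReal.rpow_le_rpow (hpt x) (by linarith)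
    _ ≤ ∫⁻ x, W x ^ p := lintegral_average_translate_rpow_le ν hp hWM
    _ = _ := by
        refine lintegral_congr_ae ?_
        filter_upwards [hWm.ae_eq_mk] with s hs
        rw [hW, ← hs]

lemma exists_smooth_approx {n : ℕ} {u : Euc n → ℝ} {V : Euc n → Fin n → ℝ}
    (h : HasWeakGradient u V) {p : ℝ} (hp : 1 ≤ p) :
    ∃ v : ℕ → Euc n → ℝ, (∀ j, ContDiff ℝ 1 (v j)) ∧
      (∀ j, ∫⁻ x, ‖fderiv ℝ (v j) x‖ₑ ^ p ≤ ∫⁻ x, ‖∑ i, |V x i|‖ₑ ^ p) ∧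
      ∀ᵐ x, Tendsto (fun j => v j x) atTop (nhds (u x)) := by
  let φ : ℕ → ContDiffBump (0 : Euc n) := fun j =>
    ⟨1 / ((j : ℝ) + 1), 2 * (1 / ((j : ℝ) + 1)), by positivity,
      by have : (0 : ℝ) < 1 / ((j : ℝ) + 1) := by positivity
         linarith⟩
  refine ⟨_, fun j => (φ j).hasCompactSupport_normed.contDiff_convolution_left
    (ContinuousLinearMap.lsmul ℝ ℝ) (φ j).contDiff_normed h.1,
    fun j => lintegral_fderiv_mollify_le h (φ j) hp, ?_⟩
  refine ContDiffBump.ae_convolution_tendsto_right_of_locallyIntegrable (K := 2) ?_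
    (Eventually.of_forall fun j => le_rfl) h.1
  simpa [φ] using (tendsto_one_div_add_atTop_nhds_zero_nat (𝕜 := ℝ)).const_mul 2

/-! ### Localization and control of the constants -/

/-- Proved through real norms: the extended norm of `ContinuousLinearMap` does not unify with
the instance expected by `enorm_add_le`. -/
lemma enorm_clm_add_le {n : ℕ} (a b : Euc n →L[ℝ] ℝ) : ‖a + b‖ₑ ≤ ‖a‖ₑ + ‖b‖ₑ := by
  rw [← ofReal_norm, ← ofReal_norm, ← ofReal_norm,
    ← ENNReal.ofReal_add (norm_nonneg _) (norm_nonneg _)]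
  exact ENNReal.ofReal_le_ofReal (norm_add_le _ _)

/-- Take `w x = χ (x / R) (v x - c)` with `c` from Poincaré's inequality on the ball of radius `2 R`.
The gradient of the cutoff contributes a factor `1 / R`, which the factor `R` in Poincaré's
inequality compensates; hence `C` does not depend on `R`. -/
lemma exists_compactly_supported_localization (n : ℕ) {p : ℝ} (hp : 1 ≤ p) :
    ∃ C : NNReal, ∀ v : Euc n → ℝ, ContDiff ℝ 1 v → ∀ R : ℝ, 0 < R →
      ∃ (c : ℝ) (w : Euc n → ℝ), ContDiff ℝ 1 w ∧ HasCompactSupport w ∧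
        (∀ x, ‖x‖ ≤ R → w x = v x - c) ∧
        ∫⁻ x, ‖fderiv ℝ w x‖ₑ ^ p ≤ C * ∫⁻ x, ‖fderiv ℝ v x‖ₑ ^ p := by
  have hp0 : 0 < p := by linarith
  obtain ⟨χ, D, hχ, hχ01, hχ1, hχ2, hχD, hχs⟩ := exists_cutoff (Euc n)
  refine ⟨2 ^ (p - 1) * (1 + (4 * D) ^ p * 2 ^ n), fun v hv R hR => ?_⟩
  obtain ⟨c, hc⟩ := exists_poincare hp hv (R := 2 * R) (by positivity)
  have hdv : Continuous (fderiv ℝ v) := hv.continuous_fderiv one_ne_zero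
  set B := Metric.ball (0 : Euc n) (2 * R) with hB
  have hBm : MeasurableSet B := Metric.isOpen_ball.measurableSet
  let η : Euc n → ℝ := fun x => χ (R⁻¹ • x)
  have hη : ContDiff ℝ 1 η := hχ.comp (contDiff_const_smul R⁻¹)
  have hηs : HasCompactSupport η := by
    refine HasCompactSupport.of_support_subset_isCompact
      (isCompact_closedBall (0 : Euc n) (2 * R)) fun x hx => ?_
    by_contra hcon
    refine hx (hχ2 _ ?_)
    rw [mem_closedBall_zero_iff, not_le] at hcon
    rw [norm_smul, norm_inv, Real.norm_of_nonneg hR.le, inv_mul_eq_div, le_div_iff₀ hR]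
    exact hcon.le
  have hηd : ∀ x, ‖fderiv ℝ η x‖ₑ ≤ B.indicator (fun _ => D * ENNReal.ofReal R⁻¹) x := by
    intro x
    have h1 : HasFDerivAt η ((fderiv ℝ χ (R⁻¹ • x)).comp
        (R⁻¹ • ContinuousLinearMap.id ℝ (Euc n))) x :=
      ((hχ.differentiable one_ne_zero _).hasFDerivAt).comp x ((hasFDerivAt_id x).const_smul R⁻¹)
    rw [h1.fderiv, ContinuousLinearMap.comp_smul, ContinuousLinearMap.comp_id]
    by_cases hx : x ∈ B
    · rw [indicator_of_mem hx, enorm_smul, mul_comm, Real.enorm_of_nonneg (by positivity)]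
      gcongr
      exact enorm_le_coe.2 (hχD _)
    · have h0 : fderiv ℝ χ (R⁻¹ • x) = 0 := by
        by_contra hne
        have := (hχs _ hne).2
        rw [norm_smul, norm_inv, Real.norm_of_nonneg hR.le, inv_mul_eq_div, div_lt_iff₀ hR] at this
        exact hx (by simpa [hB] using this)
      rw [h0, smul_zero, ← ofReal_norm, norm_zero, ENNReal.ofReal_zero]
      exact zero_le
  refine ⟨c, fun x => η x * (v x - c), hη.mul (hv.sub contDiff_const), hηs.mul_right, ?_, ?_⟩
  · intro x hx
    have : η x = 1 := by
      apply hχ1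
      rw [norm_smul, norm_inv, Real.norm_of_nonneg hR.le, inv_mul_eq_div, div_le_one hR]
      exact hx
    show η x * (v x - c) = _
    rw [this, one_mul]
  have hdw : ∀ x, ‖fderiv ℝ (fun x => η x * (v x - c)) x‖ₑ ≤ ‖fderiv ℝ v x‖ₑ +
      B.indicator (fun x => D * ENNReal.ofReal R⁻¹ * ‖v x - c‖ₑ) x := by
    intro x
    have h1 := ((hη.differentiable one_ne_zero x).hasFDerivAt).mul
      (((hv.differentiable one_ne_zero x).hasFDerivAt).sub_const c)
    have h1' : fderiv ℝ (fun x => η x * (v x - c)) x = _ := h1.fderiv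
    rw [h1']
    refine (enorm_clm_add_le _ _).trans (add_le_add ?_ ?_)
    · rw [enorm_smul]
      refine mul_le_of_le_one_left zero_le ?_
      rw [Real.enorm_of_nonneg (hχ01 _).1, ← ENNReal.ofReal_one]
      exact ENNReal.ofReal_le_ofReal (hχ01 _).2
    · rw [enorm_smul, mul_comm]
      refine (mul_le_mul_left (hηd x) _).trans_eq ?_
      by_cases hx : x ∈ B
      · rw [indicator_of_mem hx, indicator_of_mem hx]
      · rw [indicator_of_notMem hx, indicator_of_notMem hx, zero_mul]
  have hvm : Measurable fun x => ‖v x - c‖ₑ ^ p :=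
    (hv.continuous.sub continuous_const).enorm.measurable.pow_const p
  have hGm : Measurable fun x => ‖fderiv ℝ v x‖ₑ ^ p := hdv.enorm.measurable.pow_const p
  have hpt : ∀ x, ‖fderiv ℝ (fun x => η x * (v x - c)) x‖ₑ ^ p ≤
      2 ^ (p - 1) * (‖fderiv ℝ v x‖ₑ ^ p +
        B.indicator (fun x => (D * ENNReal.ofReal R⁻¹) ^ p * ‖v x - c‖ₑ ^ p) x) := by
    intro x
    refine (ENNReal.rpow_le_rpow (hdw x) hp0.le).trans
      ((ENNReal.rpow_add_le_mul_rpow_add_rpow _ _ hp).trans_eq ?_)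
    congr 2
    by_cases hx : x ∈ B
    · rw [indicator_of_mem hx, indicator_of_mem hx, ENNReal.mul_rpow_of_nonneg _ _ hp0.le]
    · rw [indicator_of_notMem hx, indicator_of_notMem hx, ENNReal.zero_rpow_of_pos hp0]
  calc _ ≤ ∫⁻ x, 2 ^ (p - 1) * (‖fderiv ℝ v x‖ₑ ^ p +
        B.indicator (fun x => (D * ENNReal.ofReal R⁻¹) ^ p * ‖v x - c‖ₑ ^ p) x) :=
        lintegral_mono hpt
    _ = 2 ^ (p - 1) * ((∫⁻ x, ‖fderiv ℝ v x‖ₑ ^ p) +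
          (D * ENNReal.ofReal R⁻¹) ^ p * ∫⁻ x in B, ‖v x - c‖ₑ ^ p) := by
        have hsum : Measurable fun x => ‖fderiv ℝ v x‖ₑ ^ p +
            B.indicator (fun x => (D * ENNReal.ofReal R⁻¹) ^ p * ‖v x - c‖ₑ ^ p) x :=
          hGm.add ((hvm.const_mul _).indicator hBm)
        rw [lintegral_const_mul _ hsum, lintegral_add_left hGm, lintegral_indicator hBm, lintegral_const_mul _ hvm]
    _ ≤ 2 ^ (p - 1) * ((∫⁻ x, ‖fderiv ℝ v x‖ₑ ^ p) +
          (D * ENNReal.ofReal R⁻¹) ^ p * (ENNReal.ofReal (2 * (2 * R)) ^ p * 2 ^ n *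
            ∫⁻ x, ‖fderiv ℝ v x‖ₑ ^ p)) := by
        gcongr
        exact hc.trans (mul_le_mul_right (lintegral_mono' Measure.restrict_le_self le_rfl) _)
    _ = 2 ^ (p - 1) * (1 + (D * ENNReal.ofReal R⁻¹ * ENNReal.ofReal (2 * (2 * R))) ^ p * 2 ^ n) *
            ∫⁻ x, ‖fderiv ℝ v x‖ₑ ^ p := by
        rw [ENNReal.mul_rpow_of_nonneg (_ * _) _ hp0.le]
        ring
    _ = _ := by
        congr 1
        have : (D : ℝ≥0∞) * ENNReal.ofReal R⁻¹ * ENNReal.ofReal (2 * (2 * R)) = 4 * D := by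
          rw [mul_assoc, ← ENNReal.ofReal_mul (by positivity),
            show R⁻¹ * (2 * (2 * R)) = 4 by field_simp; norm_num, mul_comm]
          simp
        rw [this]
        push_cast
        rw [ENNReal.coe_rpow_of_nonneg _ hp0.le, ENNReal.coe_rpow_of_nonneg _ (by linarith : 0 ≤ p - 1)]
        push_cast
        rfl

/-- If `|c j| → ∞`, then `|w j| → ∞` almost everywhere, and Fatou's lemma contradicts the uniform
`L ^ q` bound on the `w j`. -/
lemma exists_frequently_bounded {n : ℕ} {q : ℝ} (hq : 0 < q) {v w : ℕ → Euc n → ℝ}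
    {u : Euc n → ℝ} {c : ℕ → ℝ} {M : ℝ≥0∞} (hM : M ≠ ⊤) (hw : ∀ j, Continuous (w j))
    (hwM : ∀ j, ∫⁻ x, ‖w j x‖ₑ ^ q ≤ M) (hwv : ∀ x, ∀ᶠ j in atTop, w j x = v j x - c j)
    (hvu : ∀ᵐ x, Tendsto (fun j => v j x) atTop (nhds (u x))) :
    ∃ K : ℝ, ∃ᶠ j in atTop, c j ∈ Metric.closedBall (0 : ℝ) K := by
  by_contra! hcon
  have hc : Tendsto (fun j => ‖c j‖) atTop atTop := by
    rw [tendsto_atTop]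
    intro K
    filter_upwards [hcon K] with j hj
    rw [mem_closedBall_zero_iff, not_le] at hj
    exact hj.le
  have hlim : ∀ᵐ x, liminf (fun j => ‖w j x‖ₑ ^ q) atTop = ⊤ := by
    filter_upwards [hvu] with x hx
    have h1 : Tendsto (fun j => ‖c j‖ + -‖v j x‖) atTop atTop := hc.atTop_add hx.norm.neg
    have h2 : Tendsto (fun j => ‖w j x‖) atTop atTop := by
      refine tendsto_atTop_mono' _ ?_ h1
      filter_upwards [hwv x] with j hj
      rw [hj, norm_sub_rev]
      linarith [norm_sub_norm_le (c j) (v j x)]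
    have h3 : Tendsto (fun j => ‖w j x‖ₑ) atTop (nhds ⊤) := by
      simp_rw [← ofReal_norm]
      exact ENNReal.tendsto_ofReal_nhds_top.2 h2
    have h4 := (ENNReal.continuous_rpow_const (y := q)).tendsto ⊤
    rw [ENNReal.top_rpow_of_pos hq] at h4
    exact (h4.comp h3).liminf_eq
  have htop : (⊤ : ℝ≥0∞) ≤ M := by
    calc (⊤ : ℝ≥0∞) = ∫⁻ _ : Euc n, ⊤ := by
          rw [lintegral_const, ENNReal.top_mul (NeZero.ne _)]
      _ = ∫⁻ x, liminf (fun j => ‖w j x‖ₑ ^ q) atTop :=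
          lintegral_congr_ae (hlim.mono fun x hx => hx.symm)
      _ ≤ liminf (fun j => ∫⁻ x, ‖w j x‖ₑ ^ q) atTop :=
          lintegral_liminf_le fun j => (hw j).enorm.measurable.pow_const q
      _ ≤ M := (liminf_le_liminf (Eventually.of_forall hwM)).trans_eq (by simp)
  exact hM (top_le_iff.1 htop)

/-! ### The Lorentz–Sobolev inequality -/

/-- For 1 ≤ p < n (n ≥ 2) there is C = C(n,p) such that for every weakly
differentiable u on ℝⁿ with |∇u| ∈ L^p(ℝⁿ) there is λ ∈ ℝ with
‖u − λ‖_{L^{np/(n−p), p}(ℝⁿ)} ≤ C ‖∇u‖_{L^p(ℝⁿ)}. -/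
theorem stmt_2 (n : ℕ) (hn : 2 ≤ n) (p : ℝ) (hp1 : 1 ≤ p) (hpn : p < n) :
    ∃ C : ℝ, 0 < C ∧
      ∀ (u : Euc n → ℝ) (V : Euc n → Fin n → ℝ), HasWeakGradient u V →
        eLpNorm (fun x => ∑ i, |V x i|) (ENNReal.ofReal p) volume < ⊤ →
        ∃ lam : ℝ,
          lorentzNorm volume ((n * p) / (n - p)) p (fun x => u x - lam) ≤
            ENNReal.ofReal C * eLpNorm (fun x => ∑ i, |V x i|) (ENNReal.ofReal p) volume := by
  have hp0 : 0 < p := by linarith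
  have hn0 : (0 : ℝ) < n := by linarith
  have hnp : (0 : ℝ) < n - p := by linarith
  have hb1 : p / n < 1 := (div_lt_one hn0).2 hpn
  set q : ℝ := n * p / (n - p) with hqdef
  have hq0 : 0 < q := by positivity
  obtain ⟨K, hK⟩ := exists_gns hn hp1 (q := q) (by rw [hqdef]; field_simp) hq0
  obtain ⟨C₁, hC₁⟩ := exists_dyadicSum_le hn hp1 hpn
  obtain ⟨C₂, hC₂⟩ := exists_compactly_supported_localization n hp1
  set T : ℝ≥0∞ := 2 ^ p * ENNReal.ofReal (1 / (1 - p / n)) * (C₁ * C₂) with hT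
  have hTtop : T ^ (1 / p) ≠ ⊤ := by
    refine ENNReal.rpow_ne_top_of_nonneg (by positivity) ?_
    refine ENNReal.mul_ne_top (ENNReal.mul_ne_top ?_ ENNReal.ofReal_ne_top)
      (ENNReal.mul_ne_top ENNReal.coe_ne_top ENNReal.coe_ne_top)
    exact ENNReal.rpow_ne_top_of_nonneg hp0.le ENNReal.ofNat_ne_top
  -- The summand `1` only serves to make the constant positive.
  refine ⟨(T ^ (1 / p)).toReal + 1, by positivity, fun u V huV hV => ?_⟩
  set N := eLpNorm (fun x => ∑ i, |V x i|) (ENNReal.ofReal p) volume with hN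
  have hNp : ∫⁻ x, ‖∑ i, |V x i|‖ₑ ^ p = N ^ p := by
    rw [hN, eLpNorm_eq_lintegral_rpow_enorm_toReal (by simpa using hp0) ENNReal.ofReal_ne_top,
      ENNReal.toReal_ofReal hp0.le, ← ENNReal.rpow_mul, one_div_mul_cancel hp0.ne',
      ENNReal.rpow_one]
  obtain ⟨v, hvC, hvN, hvu⟩ := exists_smooth_approx huV hp1
  rw [hNp] at hvN
  choose c w hwC hws hwv hwd using fun j : ℕ => hC₂ (v j) (hvC j) ((j : ℝ) + 1) (by positivity)
  have hwN : ∀ j, ∫⁻ x, ‖fderiv ℝ (w j) x‖ₑ ^ p ≤ C₂ * N ^ p := fun j =>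
    (hwd j).trans (by gcongr; exact hvN j)
  have hwv' : ∀ x, ∀ᶠ j in atTop, w j x = v j x - c j := by
    intro x
    filter_upwards [tendsto_natCast_atTop_atTop.eventually_ge_atTop ‖x‖] with j hj
    exact hwv j x (by linarith)
  have hM : ((K : ℝ≥0∞) ^ p * (C₂ * N ^ p)) ^ (q / p) ≠ ⊤ := by
    refine ENNReal.rpow_ne_top_of_nonneg (by positivity) (ENNReal.mul_ne_top ?_
      (ENNReal.mul_ne_top ENNReal.coe_ne_top ?_))
    · exact ENNReal.rpow_ne_top_of_nonneg hp0.le ENNReal.coe_ne_top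
    · exact ENNReal.rpow_ne_top_of_nonneg hp0.le hV.ne
  obtain ⟨L, hL⟩ := exists_frequently_bounded hq0 hM (fun j => (hwC j).continuous)
    (fun j => by
      have h1 := (hK (w j) (hwC j) (hws j)).trans (mul_le_mul_right (hwN j) _)
      have h2 := ENNReal.rpow_le_rpow h1 (by positivity : 0 ≤ q / p)
      rwa [← ENNReal.rpow_mul, div_mul_div_cancel₀ hq0.ne', div_self hp0.ne',
        ENNReal.rpow_one] at h2) hwv' hvu
  -- Only infinitely many `c j` need to lie in a bounded set for a convergent subsequence.
  obtain ⟨lam, -, φ, hφ, hlam⟩ := tendsto_subseq_of_frequently_bounded Metric.isBounded_closedBall hL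
  refine ⟨lam, ?_⟩
  have hlimit : ∀ᵐ x, Tendsto (fun j => w (φ j) x) atTop (nhds (u x - lam)) := by
    filter_upwards [hvu] with x hx
    refine ((hx.comp hφ.tendsto_atTop).sub hlam).congr' ?_
    filter_upwards [hφ.tendsto_atTop.eventually (hwv' x)] with j hj
    exact hj.symm
  have hdy : dyadicSum volume p (1 - p / n) (fun x => u x - lam) ≤ C₁ * (C₂ * N ^ p) := by
    refine dyadicSum_le_of_tendsto (by linarith) (fun j => (hwC (φ j)).continuous.measurable)
      (huV.1.aestronglyMeasurable.aemeasurable.sub_const lam) hlimit fun j => ?_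
    exact (hC₁ _ (hwC _) (hws _)).trans (mul_le_mul_right (hwN _) _)
  have hfin : lorentzNorm volume q p (fun x => u x - lam) ^ p ≤ T * N ^ p := by
    refine (lorentzNorm_rpow_le volume _ hp0 hb1 ?_).trans ((mul_le_mul_right hdy _).trans_eq ?_)
    · rw [hqdef]; field_simp; ring
    · rw [hT]; ring
  calc lorentzNorm volume q p (fun x => u x - lam) ≤ (T * N ^ p) ^ (1 / p) := by
        rwa [one_div, ENNReal.le_rpow_inv_iff hp0]
    _ = T ^ (1 / p) * N := by
        rw [ENNReal.mul_rpow_of_nonneg _ _ (by positivity), ← ENNReal.rpow_mul,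
          mul_one_div_cancel hp0.ne', ENNReal.rpow_one]
    _ ≤ ENNReal.ofReal ((T ^ (1 / p)).toReal + 1) * N := by
        gcongr
        conv_lhs => rw [← ENNReal.ofReal_toReal hTtop]
        exact ENNReal.ofReal_le_ofReal (by linarith)
end
end
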